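/- arXiv:1204.0543 — 3 statements merged into one kernel-verified Lean document; each statement's English description precedes it below -/
import Mathlib

section
/- For every positive integer k and positive integers d₁, …, d_k there exists a constant C > 0 depending only on k and d₁ + ⋯ + d_k such that: for all polynomials pⁱ : ℝⁿ → ℝ of degree at most d_i (1 ≤ i ≤ k) and all 0 < ε < 1/2, Pr( ∏_{i=1}^k |pⁱ(X)| < ε·|det M| ) ≤ C·ε·(log(1/ε))^k, where X, Y¹, …, Y^k are independent standard Gaussian random vectors on ℝⁿ and M is the k×k matrix with entries M_{ij} = ⟨∇p^j(X), Yⁱ⟩. -/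
open MeasureTheory ProbabilityTheory

/-- The standard Gaussian measure on `ℝⁿ`. -/
noncomputable def stdGaussian (n : ℕ) : Measure (Fin n → ℝ) :=
  Measure.pi fun _ => gaussianReal 0 1


theorem sac_newton (r : ℝ) (hr : 0 < r) (hr1 : r ≤ 1) : ∀ (m : ℕ) (p : Polynomial ℝ) (η : ℝ),
    p.natDegree ≤ m → ∀ x : Fin (m + 1) → ℝ, (∀ i, x i ∈ Set.Icc (0 : ℝ) 1) →
    (∀ i j, i ≠ j → r ≤ |x i - x j|) → (∀ i, |p.eval (x i)| ≤ η) →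
    ∀ j, |p.coeff j| ≤ 5 ^ m * η / r ^ m := by
  intro m
  induction m with
  | zero =>
    intro p η hp x hx hs hv j
    have hη : 0 ≤ η := (abs_nonneg _).trans (hv 0)
    obtain ⟨a, rfl⟩ := Polynomial.natDegree_eq_zero.1 (Nat.le_zero.1 hp)
    have := hv 0
    simp only [Polynomial.eval_C] at this
    rw [Polynomial.coeff_C]
    split_ifs <;> simp [this, hη]
  | succ m ih =>
    intro p η hp x hx hs hv j
    have hη : 0 ≤ η := (abs_nonneg _).trans (hv 0)
    set a := x 0 with ha
    set q := p /ₘ (Polynomial.X - Polynomial.C a) with hq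
    have hpq : p = Polynomial.C (p.eval a) + (Polynomial.X - Polynomial.C a) * q := by
      have := Polynomial.modByMonic_add_div p (Polynomial.X - Polynomial.C a)
      rw [Polynomial.modByMonic_X_sub_C_eq_C_eval] at this
      exact this.symm
    have hqd : q.natDegree ≤ m := by
      rw [hq, Polynomial.natDegree_divByMonic _ (Polynomial.monic_X_sub_C a),
        Polynomial.natDegree_X_sub_C]
      omega
    have hqv : ∀ i : Fin (m + 1), |q.eval (x i.succ)| ≤ 2 * η / r := by
      intro i
      have h1 : p.eval (x i.succ) = p.eval a + (x i.succ - a) * q.eval (x i.succ) := by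
        conv_lhs => rw [hpq]
        simp
      have h2 : r ≤ |x i.succ - a| := hs _ _ (Fin.succ_ne_zero i)
      have h3 : |(x i.succ - a) * q.eval (x i.succ)| ≤ 2 * η := by
        have : (x i.succ - a) * q.eval (x i.succ) = p.eval (x i.succ) - p.eval a := by
          rw [h1]; ring
        rw [this]
        calc _ ≤ |p.eval (x i.succ)| + |p.eval a| := abs_sub _ _
          _ ≤ 2 * η := by linarith [hv i.succ, hv 0]
      rw [abs_mul] at h3
      rw [le_div_iff₀ hr]
      nlinarith [abs_nonneg (q.eval (x i.succ))]
    have hqc := ih q (2 * η / r) hqd (fun i => x i.succ) (fun i => hx _)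
      (fun i j hij => hs _ _ (fun h => hij (Fin.succ_injective _ h))) hqv
    have ha1 : |a| ≤ 1 := by
      have := hx 0
      rw [abs_le]; constructor <;> linarith [this.1, this.2]
    set B := 5 ^ m * (2 * η / r) / r ^ m with hB
    have hB0 : 0 ≤ B := by positivity
    have hc : |p.coeff j| ≤ η + 2 * B := by
      rw [hpq, sub_mul, Polynomial.coeff_add, Polynomial.coeff_sub, Polynomial.coeff_C_mul,
        Polynomial.coeff_C]
      have e1 : |(if j = 0 then p.eval a else 0)| ≤ η := by
        split_ifs
        · exact hv 0
        · simpa using hη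
      have e2 : |(Polynomial.X * q).coeff j| ≤ B := by
        cases j with
        | zero => simpa using hB0
        | succ j => rw [Polynomial.coeff_X_mul]; exact hqc j
      have e3 : |a * q.coeff j| ≤ B := by
        rw [abs_mul]
        calc _ ≤ 1 * B := by gcongr; exact hqc j
          _ = B := one_mul _
      calc _ ≤ |(if j = 0 then p.eval a else 0)| + |(Polynomial.X * q).coeff j - a * q.coeff j| :=
            abs_add_le _ _
        _ ≤ η + (B + B) := by
            gcongr
            exact (abs_sub _ _).trans (by gcongr)
        _ = _ := by ring
    have hB' : B = 2 * 5 ^ m * (η / r ^ (m + 1)) := by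
      rw [hB]; field_simp; ring
    have hη' : η ≤ η / r ^ (m + 1) := by
      rw [le_div_iff₀ (by positivity)]
      exact mul_le_of_le_one_right hη (pow_le_one₀ hr.le hr1)
    have h5 : (1 : ℝ) ≤ 5 ^ m := one_le_pow₀ (by norm_num)
    have h0 : 0 ≤ η / r ^ (m + 1) := by positivity
    calc _ ≤ _ := hc
      _ ≤ 1 * (η / r ^ (m + 1)) + 4 * 5 ^ m * (η / r ^ (m + 1)) := by rw [hB']; linarith
      _ ≤ 5 ^ m * (η / r ^ (m + 1)) + 4 * 5 ^ m * (η / r ^ (m + 1)) := by gcongr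
      _ = _ := by ring

theorem sac_sep (r : ℝ) (A : Set ℝ) : ∀ m : ℕ,
    ENNReal.ofReal (2 * m * r) < volume A →
    ∃ x : Fin (m + 1) → ℝ, (∀ i, x i ∈ A) ∧ ∀ i j, i ≠ j → r ≤ |x i - x j| := by
  intro m
  induction m with
  | zero =>
    intro h
    have : A.Nonempty := by
      by_contra hne
      rw [Set.not_nonempty_iff_eq_empty] at hne
      simp [hne] at h
    obtain ⟨y, hy⟩ := this
    exact ⟨fun _ => y, fun _ => hy, fun i j hij => (hij (by ext; omega)).elim⟩
  | succ m ih =>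
    intro h
    by_cases hr : r ≤ 0
    · have : A.Nonempty := by
        by_contra hne
        rw [Set.not_nonempty_iff_eq_empty] at hne
        simp [hne] at h
      obtain ⟨y, hy⟩ := this
      exact ⟨fun _ => y, fun _ => hy, fun i j hij => by simpa using hr⟩
    push Not at hr
    obtain ⟨x, hxA, hxs⟩ := ih (lt_of_le_of_lt (ENNReal.ofReal_le_ofReal (by push_cast; nlinarith)) h)
    have : ¬ A ⊆ ⋃ i, Metric.ball (x i) r := by
      intro hsub
      have h1 : volume A ≤ ENNReal.ofReal (2 * ((m + 1 : ℕ) : ℝ) * r) := by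
        calc volume A ≤ volume (⋃ i, Metric.ball (x i) r) := measure_mono hsub
          _ ≤ ∑ i, volume (Metric.ball (x i) r) := measure_iUnion_fintype_le _ _
          _ = ∑ i : Fin (m + 1), ENNReal.ofReal (2 * r) := by simp [Real.volume_ball]
          _ = ENNReal.ofReal (2 * ((m + 1 : ℕ) : ℝ) * r) := by
            rw [← ENNReal.ofReal_sum_of_nonneg (fun _ _ => by positivity)]
            congr 1
            simp; ring
      exact absurd h (not_lt.2 h1)
    rw [Set.not_subset] at this
    obtain ⟨y, hyA, hy⟩ := this
    simp only [Set.mem_iUnion, Metric.mem_ball, not_exists, not_lt, Real.dist_eq] at hy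
    refine ⟨Fin.cons y x, ?_, ?_⟩
    · intro i
      refine Fin.cases ?_ ?_ i
      · simpa using hyA
      · intro i; simpa using hxA i
    · intro i j
      refine Fin.cases ?_ (fun i => ?_) i <;> refine Fin.cases ?_ (fun j => ?_) j
      · simp
      · intro _; simpa using hy j
      · intro _; simpa [abs_sub_comm] using hy i
      · intro hij
        simpa using hxs i j (fun h => hij (by rw [h]))

theorem sac_ball1 (m : ℕ) (p : Polynomial ℝ) (hp : p.natDegree ≤ m) (r τ : ℝ) (hr : 0 < r)
    (hr1 : r ≤ 1) (hτ : 0 < τ) (j : ℕ) (hj : τ ≤ |p.coeff j|) :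
    volume {x : ℝ | x ∈ Set.Icc (0 : ℝ) 1 ∧ |p.eval x| < (2 * 5 ^ m)⁻¹ * r ^ m * τ} ≤
      ENNReal.ofReal (2 * m * r) := by
  by_contra! h
  obtain ⟨x, hxA, hxs⟩ := sac_sep r _ m h
  have := sac_newton r hr hr1 m p ((2 * 5 ^ m)⁻¹ * r ^ m * τ) hp x (fun i => (hxA i).1) hxs
    (fun i => (hxA i).2.le) j
  have e : 5 ^ m * ((2 * 5 ^ m)⁻¹ * r ^ m * τ) / r ^ m = τ / 2 := by
    field_simp
  rw [e] at this
  linarith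

theorem sac_small_ball (m : ℕ) : ∀ k : ℕ, ∃ U c K : ℝ, 0 < U ∧ 0 < c ∧ 0 < K ∧
    ∀ P : MvPolynomial (Fin k) ℝ, (∀ i, P.degreeOf i ≤ m) → P ≠ 0 →
    ∃ σ : ℝ, 0 < σ ∧ (∀ t ∈ Set.Icc (0 : Fin k → ℝ) 1, |MvPolynomial.eval t P| ≤ U * σ) ∧
    ∀ r : ℝ, 0 < r → r ≤ 1 →
      volume {t : Fin k → ℝ | t ∈ Set.Icc (0 : Fin k → ℝ) 1 ∧
        |MvPolynomial.eval t P| < c * r ^ (m * k) * σ} ≤ ENNReal.ofReal (K * r) := by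
  intro k
  induction k with
  | zero =>
    refine ⟨1, 1, 1, one_pos, one_pos, one_pos, fun P _ hP => ?_⟩
    obtain ⟨a, rfl⟩ := MvPolynomial.C_surjective (Fin 0) P
    have ha : a ≠ 0 := by rintro rfl; simp at hP
    refine ⟨|a|, abs_pos.2 ha, ?_, ?_⟩
    · intro t _; simp
    · intro r _ _; simp
  | succ k ih =>
    obtain ⟨U, c, K, hU, hc, hK, H⟩ := ih
    refine ⟨(m + 1) * U, (2 * 5 ^ m)⁻¹ * c, K + 2 * m, by positivity, by positivity,
      by positivity, fun P hP hP0 => ?_⟩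
    set Q := MvPolynomial.finSuccEquiv ℝ k P with hQ
    have hQ0 : Q ≠ 0 := by
      rw [hQ]; simpa using hP0
    have hQd : Q.natDegree ≤ m := by
      rw [hQ, MvPolynomial.natDegree_finSuccEquiv]; exact hP 0
    have Hj : ∀ j ∈ Q.support, _ := fun j hj => H (Q.coeff j)
      (fun i => (MvPolynomial.degreeOf_coeff_finSuccEquiv P i j).trans (hP _))
      (Polynomial.mem_support_iff.1 hj)
    choose! σ hσ0 hσU hσK using Hj
    obtain ⟨J, hJ, hJmax⟩ := Finset.exists_max_image Q.support σ
      (Polynomial.nonempty_support_iff.2 hQ0)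
    refine ⟨σ J, hσ0 J hJ, ?_, ?_⟩
    · intro t ht
      have hs : Fin.tail t ∈ Set.Icc (0 : Fin k → ℝ) 1 :=
        ⟨fun i => ht.1 i.succ, fun i => ht.2 i.succ⟩
      rw [← Fin.cons_self_tail t, MvPolynomial.eval_eq_eval_mv_eval', ← hQ,
        Polynomial.eval_map, Polynomial.eval₂_eq_sum, Polynomial.sum_def]
      calc _ ≤ ∑ j ∈ Q.support, |MvPolynomial.eval (Fin.tail t) (Q.coeff j) * t 0 ^ j| :=
            Finset.abs_sum_le_sum_abs _ _
        _ ≤ ∑ j ∈ Q.support, U * σ J := by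
            refine Finset.sum_le_sum fun j hj => ?_
            rw [abs_mul]
            have h1 : |t 0 ^ j| ≤ 1 := by
              rw [abs_pow, abs_of_nonneg (ht.1 0)]
              exact pow_le_one₀ (ht.1 0) (ht.2 0)
            calc _ ≤ U * σ j * 1 := by
                  gcongr
                  · exact mul_nonneg hU.le (hσ0 j hj).le
                  · exact hσU j hj _ hs
              _ ≤ U * σ J := by rw [mul_one]; gcongr; exact hJmax j hj
        _ = (Q.support.card : ℝ) * (U * σ J) := by simp
        _ ≤ (m + 1 : ℝ) * (U * σ J) := by
            have h2 : Q.support.card ≤ m + 1 :=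
              (Polynomial.card_supp_le_succ_natDegree Q).trans (by omega)
            have h3 := hσ0 J hJ
            have : (Q.support.card : ℝ) ≤ m + 1 := by exact_mod_cast h2
            gcongr
        _ = _ := by ring
    · intro r hr hr1
      have hσJ := hσ0 J hJ
      set θ := c * r ^ (m * k) * σ J with hθ
      have hθ0 : 0 < θ := by positivity
      set η := (2 * 5 ^ m)⁻¹ * c * r ^ (m * (k + 1)) * σ J with hη
      have hηθ : η = (2 * 5 ^ m)⁻¹ * r ^ m * θ := by
        rw [hη, hθ, mul_add, pow_add]; ring
      set e := MeasurableEquiv.piFinSuccAbove (fun _ : Fin (k + 1) => ℝ) 0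
      have hmp := volume_preserving_piFinSuccAbove (fun _ : Fin (k + 1) => ℝ) 0
      set A : Set (ℝ × (Fin k → ℝ)) := Set.Icc (0 : ℝ) 1 ×ˢ {s : Fin k → ℝ |
        s ∈ Set.Icc (0 : Fin k → ℝ) 1 ∧ |MvPolynomial.eval s (Q.coeff J)| < θ} with hA
      set B : Set (ℝ × (Fin k → ℝ)) := {z | z.1 ∈ Set.Icc (0 : ℝ) 1 ∧
        z.2 ∈ Set.Icc (0 : Fin k → ℝ) 1 ∧ θ ≤ |MvPolynomial.eval z.2 (Q.coeff J)| ∧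
        |MvPolynomial.eval (Fin.cons z.1 z.2 : Fin (k + 1) → ℝ) P| < η} with hB
      have hBm : MeasurableSet B := by
        have c1 : Continuous fun z : ℝ × (Fin k → ℝ) => MvPolynomial.eval z.2 (Q.coeff J) :=
          (MvPolynomial.continuous_eval _).comp continuous_snd
        have c2 : Continuous fun z : ℝ × (Fin k → ℝ) =>
            MvPolynomial.eval (Fin.cons z.1 z.2 : Fin (k + 1) → ℝ) P :=
          (MvPolynomial.continuous_eval _).comp
            (Continuous.finCons continuous_fst continuous_snd)
        refine (measurable_fst measurableSet_Icc).inter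
          ((measurable_snd measurableSet_Icc).inter ?_)
        exact (measurableSet_le measurable_const c1.abs.measurable).inter
          (measurableSet_lt c2.abs.measurable measurable_const)
      have hsub : {t : Fin (k + 1) → ℝ | t ∈ Set.Icc (0 : Fin (k + 1) → ℝ) 1 ∧
          |MvPolynomial.eval t P| < η} ⊆ e ⁻¹' (A ∪ B) := by
        rintro t ⟨ht, htη⟩
        have h0 : e t = (t 0, Fin.tail t) := rfl
        rw [Set.mem_preimage, h0]
        have hs : Fin.tail t ∈ Set.Icc (0 : Fin k → ℝ) 1 :=
          ⟨fun i => ht.1 i.succ, fun i => ht.2 i.succ⟩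
        have ht0 : t 0 ∈ Set.Icc (0 : ℝ) 1 := ⟨ht.1 0, ht.2 0⟩
        by_cases hlt : |MvPolynomial.eval (Fin.tail t) (Q.coeff J)| < θ
        · left; exact ⟨ht0, hs, hlt⟩
        · right
          refine ⟨ht0, hs, not_lt.1 hlt, ?_⟩
          simpa [Fin.cons_self_tail] using htη
      have hvA : volume A ≤ ENNReal.ofReal (K * r) := by
        rw [hA, Measure.volume_eq_prod, Measure.prod_prod]
        simpa using hσK J hJ r hr hr1
      have hvB : volume B ≤ ENNReal.ofReal (2 * m * r) := by
        rw [Measure.volume_eq_prod, Measure.prod_apply_symm hBm]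
        calc _ ≤ ∫⁻ s, (Set.Icc (0 : Fin k → ℝ) 1).indicator
              (fun _ => ENNReal.ofReal (2 * m * r)) s := by
              refine lintegral_mono fun s => ?_
              by_cases hs : s ∈ Set.Icc (0 : Fin k → ℝ) 1 ∧
                θ ≤ |MvPolynomial.eval s (Q.coeff J)|
              · rw [Set.indicator_of_mem hs.1]
                have := sac_ball1 m (Polynomial.map (MvPolynomial.eval s) Q)
                  (Polynomial.natDegree_map_le.trans hQd) r θ hr hr1 hθ0 J
                  (by rw [Polynomial.coeff_map]; exact hs.2)
                refine le_trans (measure_mono ?_) this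
                rintro x ⟨hx, _, _, hx2⟩
                refine ⟨hx, ?_⟩
                rw [← hηθ]
                rw [MvPolynomial.eval_eq_eval_mv_eval'] at hx2
                exact hx2
              · have : (fun x => (x, s)) ⁻¹' B = ∅ := by
                  ext x
                  simp only [Set.mem_preimage, Set.mem_empty_iff_false, iff_false]
                  rintro ⟨_, h1, h2, _⟩
                  exact hs ⟨h1, h2⟩
                rw [this]; simp
          _ = _ := by
              rw [lintegral_indicator_const measurableSet_Icc, Real.volume_Icc_pi]
              simp
      calc _ ≤ volume (e ⁻¹' (A ∪ B)) := measure_mono hsub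
        _ = volume (A ∪ B) := hmp.measure_preimage_equiv _
        _ ≤ volume A + volume B := measure_union_le _ _
        _ ≤ ENNReal.ofReal (K * r) + ENNReal.ofReal (2 * m * r) := by gcongr
        _ = _ := by
          rw [← ENNReal.ofReal_add (by positivity) (by positivity)]
          congr 1; ring


theorem sac_area {k : ℕ} (S : Set (Fin k → ℝ)) (hS : MeasurableSet S)
    (f : (Fin k → ℝ) → (Fin k → ℝ)) (f' : (Fin k → ℝ) → (Fin k → ℝ) →L[ℝ] (Fin k → ℝ))
    (hf : ∀ x, HasFDerivAt f (f' x) x) (hm : Measurable fun x => (f' x).det) (N : ℕ)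
    (hN : ∀ᵐ u, (f ⁻¹' {u}).encard ≤ N) (g : (Fin k → ℝ) → ENNReal) (hg : Measurable g) :
    ∫⁻ x in S, ENNReal.ofReal |(f' x).det| * g (f x) ≤ N * ∫⁻ u, g u := by
  classical
  set S' := S ∩ {x | (f' x).det ≠ 0} with hS'
  have hdm : MeasurableSet {x | (f' x).det ≠ 0} := hm (measurableSet_singleton 0).compl
  have hS'm : MeasurableSet S' := hS.inter hdm
  let ρ : ((Fin k → ℝ) →L[ℝ] (Fin k → ℝ)) → NNReal := fun A =>
    if h : A.det ≠ 0 then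
      (‖((A.toContinuousLinearEquivOfDetNeZero h).symm : (Fin k → ℝ) →L[ℝ] (Fin k → ℝ))‖₊ + 1)⁻¹
    else 1
  have hρ : ∀ A, ρ A ≠ 0 := by
    intro A
    simp only [ρ]
    split_ifs <;> simp
  obtain ⟨t, A, htd, htm, hst, happ, hA⟩ :=
    exists_partition_approximatesLinearOn_of_hasFDerivWithinAt f S' f'
      (fun x _ => (hf x).hasFDerivWithinAt) ρ hρ
  have hinj : ∀ n, Set.InjOn f (S' ∩ t n) := by
    intro n
    rcases S'.eq_empty_or_nonempty with he | hne
    · simp [he]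
    obtain ⟨y, hy, hAy⟩ := hA hne n
    have hdet : (A n).det ≠ 0 := by rw [hAy]; exact hy.2
    have h1 := happ n
    have h2 : ((A n).toContinuousLinearEquivOfDetNeZero hdet : (Fin k → ℝ) →L[ℝ] (Fin k → ℝ))
        = A n := by ext; simp
    rw [← h2] at h1
    refine h1.injOn ?_
    rcases ((A n).toContinuousLinearEquivOfDetNeZero hdet).subsingleton_or_nnnorm_symm_pos with h | h
    · left; exact h
    · right
      rw [h2]
      simp only [ρ, dif_pos hdet]
      exact inv_strictAnti₀ h (lt_add_one _)
  have hSn : ∀ n, MeasurableSet (S' ∩ t n) := fun n => hS'm.inter (htm n)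
  have hSU : S' = ⋃ n, S' ∩ t n := by
    rw [← Set.inter_iUnion]; exact (Set.inter_eq_left.2 hst).symm
  have him : ∀ n, MeasurableSet (f '' (S' ∩ t n)) := fun n =>
    measurable_image_of_fderivWithin (hSn n) (fun x _ => (hf x).hasFDerivWithinAt) (hinj n)
  calc ∫⁻ x in S, ENNReal.ofReal |(f' x).det| * g (f x)
      ≤ ∫⁻ x in S', ENNReal.ofReal |(f' x).det| * g (f x) := by
        rw [← lintegral_indicator hS, ← lintegral_indicator hS'm]
        refine lintegral_mono fun x => ?_
        by_cases hx : x ∈ S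
        · rw [Set.indicator_of_mem hx]
          by_cases hd : (f' x).det = 0
          · simp [hd]
          · rw [Set.indicator_of_mem (show x ∈ S' from ⟨hx, hd⟩)]
        · simp [Set.indicator_of_notMem hx]
    _ = ∑' n, ∫⁻ x in S' ∩ t n, ENNReal.ofReal |(f' x).det| * g (f x) := by
        conv_lhs => rw [hSU]
        refine lintegral_iUnion hSn ?_ _
        intro i j hij
        exact (htd hij).mono Set.inter_subset_right Set.inter_subset_right
    _ = ∑' n, ∫⁻ u, (f '' (S' ∩ t n)).indicator g u := by
        refine tsum_congr fun n => ?_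
        rw [lintegral_indicator (him n)]
        exact (lintegral_image_eq_lintegral_abs_det_fderiv_mul volume (hSn n)
          (fun x _ => (hf x).hasFDerivWithinAt) (hinj n) g).symm
    _ = ∫⁻ u, ∑' n, (f '' (S' ∩ t n)).indicator g u :=
        (lintegral_tsum fun n => (hg.indicator (him n)).aemeasurable).symm
    _ ≤ ∫⁻ u, N * g u := by
        refine lintegral_mono_ae ?_
        filter_upwards [hN] with u hu
        rw [ENNReal.tsum_eq_iSup_sum]
        refine iSup_le fun F => ?_
        rw [Finset.sum_congr rfl (fun n _ => Set.indicator_apply _ _ _), ← Finset.sum_filter,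
          Finset.sum_const, nsmul_eq_mul]
        gcongr
        have key : ((F.filter fun n => u ∈ f '' (S' ∩ t n)).card : ℕ∞) ≤ N := by
          refine le_trans ?_ hu
          rw [← Set.encard_coe_eq_coe_finsetCard]
          have hex : ∀ n ∈ ((F.filter fun n => u ∈ f '' (S' ∩ t n) : Finset ℕ) : Set ℕ),
              ∃ x, x ∈ S' ∩ t n ∧ f x = u := by
            intro n hn
            simpa using (Finset.mem_filter.1 (Finset.mem_coe.1 hn)).2
          choose! φ hφ hφu using hex
          refine Set.encard_le_encard_of_injOn (f := φ) (fun n hn => hφu n hn) ?_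
          intro a ha b hb hab
          by_contra hne
          have h1 := (hφ a ha).2
          have h2 := (hφ b hb).2
          rw [hab] at h1
          exact Set.disjoint_left.1 (htd hne) h1 h2
        exact_mod_cast key
    _ = N * ∫⁻ u, g u := lintegral_const_mul _ hg

theorem sac_lintegral_prod : ∀ (k : ℕ) (h : Fin k → ℝ → ENNReal), (∀ i, Measurable (h i)) →
    ∫⁻ u : Fin k → ℝ, ∏ i, h i (u i) = ∏ i, ∫⁻ x, h i x := by
  intro k
  induction k with
  | zero => intro h _; simp [volume_pi]
  | succ k ih =>
    intro h hm
    have hmp := (volume_preserving_piFinSuccAbove (fun _ : Fin (k + 1) => ℝ) 0).symm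
    rw [← hmp.lintegral_comp_emb (MeasurableEquiv.measurableEmbedding _)]
    rw [Fin.prod_univ_succ, ← ih _ (fun i => hm i.succ)]
    have : ∀ z : ℝ × (Fin k → ℝ), ∏ i, h i ((MeasurableEquiv.piFinSuccAbove
        (fun _ : Fin (k + 1) => ℝ) 0).symm z i) = h 0 z.1 * ∏ i : Fin k, h i.succ (z.2 i) := by
      intro z
      rw [Fin.prod_univ_succ]
      rfl
    refine (lintegral_congr this).trans ?_
    rw [Measure.volume_eq_prod]
    exact lintegral_prod_mul (hm 0).aemeasurable
      (Finset.measurable_prod (f := fun (i : Fin k) (z : Fin k → ℝ) => h i.succ (z i)) Finset.univ fun i _ => (hm i.succ).comp (measurable_pi_apply i)).aemeasurable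

theorem sac_log_int (a b : ℝ) (ha : 0 < a) (hab : a ≤ b) :
    ∫⁻ x : ℝ, {x : ℝ | a ≤ |x| ∧ |x| ≤ b}.indicator (fun x => ENNReal.ofReal (1 / |x|)) x ≤
      ENNReal.ofReal (2 * Real.log (b / a)) := by
  have hpos : ∫⁻ x in Set.Icc a b, ENNReal.ofReal (1 / |x|) = ENNReal.ofReal (Real.log (b / a)) := by
    have h1 : ∫⁻ x in Set.Icc a b, ENNReal.ofReal (1 / |x|) =
        ∫⁻ x in Set.Icc a b, ENNReal.ofReal (1 / x) := by
      refine setLIntegral_congr_fun measurableSet_Icc fun x hx => ?_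
      rw [abs_of_pos (ha.trans_le hx.1)]
    rw [h1, ← integral_one_div_of_pos ha (ha.trans_le hab),
      intervalIntegral.integral_of_le hab, ← integral_Icc_eq_integral_Ioc,
      ofReal_integral_eq_lintegral_ofReal]
    · refine ContinuousOn.integrableOn_Icc ?_
      exact continuousOn_const.div continuousOn_id fun x hx => (ha.trans_le hx.1).ne'
    · filter_upwards [ae_restrict_mem measurableSet_Icc] with x hx
      have := ha.trans_le hx.1
      simp only [Pi.zero_apply]; positivity
  have hneg : ∫⁻ x in Set.Icc (-b) (-a), ENNReal.ofReal (1 / |x|) =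
      ∫⁻ x in Set.Icc a b, ENNReal.ofReal (1 / |x|) := by
    rw [← lintegral_indicator measurableSet_Icc, ← lintegral_indicator measurableSet_Icc,
      ← lintegral_neg_eq_self]
    refine lintegral_congr fun x => ?_
    have : -x ∈ Set.Icc (-b) (-a) ↔ x ∈ Set.Icc a b := by
      simp only [Set.mem_Icc, neg_le_neg_iff]; tauto
    by_cases hx : x ∈ Set.Icc a b
    · rw [Set.indicator_of_mem hx, Set.indicator_of_mem (this.2 hx), abs_neg]
    · rw [Set.indicator_of_notMem hx, Set.indicator_of_notMem (fun h => hx (this.1 h))]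
  have hset : {x : ℝ | a ≤ |x| ∧ |x| ≤ b} ⊆ Set.Icc a b ∪ Set.Icc (-b) (-a) := by
    rintro x ⟨h1, h2⟩
    rcases le_total 0 x with h | h
    · left; rw [abs_of_nonneg h] at h1 h2; exact ⟨h1, h2⟩
    · right; rw [abs_of_nonpos h] at h1 h2; exact ⟨by linarith, by linarith⟩
  have hlog : 0 ≤ Real.log (b / a) := Real.log_nonneg ((one_le_div ha).2 hab)
  calc _ ≤ ∫⁻ x in {x : ℝ | a ≤ |x| ∧ |x| ≤ b}, ENNReal.ofReal (1 / |x|) :=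
        lintegral_indicator_le _ _
    _ ≤ ∫⁻ x in Set.Icc a b ∪ Set.Icc (-b) (-a), ENNReal.ofReal (1 / |x|) :=
        lintegral_mono_set hset
    _ ≤ _ := lintegral_union_le _ _ _
    _ = _ := by
      rw [hneg, hpos, ← ENNReal.ofReal_add hlog hlog]; congr 1; ring

theorem sac_null : ∀ (k : ℕ) (P : MvPolynomial (Fin k) ℝ), P ≠ 0 →
    ∀ᵐ u : Fin k → ℝ, MvPolynomial.eval u P ≠ 0 := by
  intro k
  induction k with
  | zero =>
    intro P hP
    obtain ⟨a, rfl⟩ := MvPolynomial.C_surjective (Fin 0) P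
    have ha : a ≠ 0 := by rintro rfl; simp at hP
    exact Filter.Eventually.of_forall fun u => by simpa using ha
  | succ k ih =>
    intro P hP
    set Q := MvPolynomial.finSuccEquiv ℝ k P with hQ
    have hQ0 : Q ≠ 0 := by rw [hQ]; simpa using hP
    obtain ⟨J, hJ⟩ := Polynomial.nonempty_support_iff.2 hQ0
    have hJ' := ih _ (Polynomial.mem_support_iff.1 hJ)
    have hmp := volume_preserving_piFinSuccAbove (fun _ : Fin (k + 1) => ℝ) 0
    have c2 : Continuous fun z : ℝ × (Fin k → ℝ) =>
        MvPolynomial.eval (Fin.cons z.1 z.2 : Fin (k + 1) → ℝ) P :=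
      (MvPolynomial.continuous_eval _).comp (Continuous.finCons continuous_fst continuous_snd)
    set B : Set (ℝ × (Fin k → ℝ)) :=
      {z | MvPolynomial.eval (Fin.cons z.1 z.2 : Fin (k + 1) → ℝ) P = 0} with hB
    have hBm : MeasurableSet B := c2.measurable (measurableSet_singleton 0)
    have hB0 : volume B = 0 := by
      rw [Measure.volume_eq_prod, Measure.prod_apply_symm hBm,
        lintegral_eq_zero_iff (measurable_measure_prodMk_right hBm)]
      filter_upwards [hJ'] with s hs
      have hne : Polynomial.map (MvPolynomial.eval s) Q ≠ 0 := by
        intro h0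
        apply hs
        rw [← Polynomial.coeff_map, h0, Polynomial.coeff_zero]
      refine (Set.Finite.subset (Polynomial.map (MvPolynomial.eval s) Q).roots.toFinset.finite_toSet
        ?_).measure_zero _
      intro x hx
      simp only [Set.mem_preimage, hB, Set.mem_ofPred_eq, MvPolynomial.eval_eq_eval_mv_eval'] at hx
      simp only [Finset.mem_coe, Multiset.mem_toFinset, Polynomial.mem_roots hne,
        Polynomial.IsRoot]
      exact hx
    rw [ae_iff]
    have : {u : Fin (k + 1) → ℝ | ¬ MvPolynomial.eval u P ≠ 0} =
        MeasurableEquiv.piFinSuccAbove (fun _ : Fin (k + 1) => ℝ) 0 ⁻¹' B := by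
      ext u
      simp [hB, Fin.cons_self_tail]
    rw [this, hmp.measure_preimage_equiv, hB0]


/-- `f` is a polynomial function of total degree at most `N`. -/
def SacPoly (k N : ℕ) (f : (Fin k → ℝ) → ℝ) : Prop :=
  ∃ P : MvPolynomial (Fin k) ℝ, P.totalDegree ≤ N ∧ ∀ t, MvPolynomial.eval t P = f t

theorem SacPoly.mono {k M N : ℕ} {f : (Fin k → ℝ) → ℝ} (h : SacPoly k M f) (hMN : M ≤ N) :
    SacPoly k N f := by
  obtain ⟨P, h1, h2⟩ := h
  exact ⟨P, h1.trans hMN, h2⟩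

theorem SacPoly.mul {k M N : ℕ} {f g : (Fin k → ℝ) → ℝ} (hf : SacPoly k M f)
    (hg : SacPoly k N g) : SacPoly k (M + N) (fun t => f t * g t) := by
  obtain ⟨P, h1, h2⟩ := hf
  obtain ⟨Q, h3, h4⟩ := hg
  exact ⟨P * Q, (MvPolynomial.totalDegree_mul _ _).trans (add_le_add h1 h3),
    fun t => by simp [h2, h4]⟩

theorem SacPoly.add {k N : ℕ} {f g : (Fin k → ℝ) → ℝ} (hf : SacPoly k N f)
    (hg : SacPoly k N g) : SacPoly k N (fun t => f t + g t) := by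
  obtain ⟨P, h1, h2⟩ := hf
  obtain ⟨Q, h3, h4⟩ := hg
  exact ⟨P + Q, (MvPolynomial.totalDegree_add _ _).trans (max_le h1 h3),
    fun t => by simp [h2, h4]⟩

theorem SacPoly.const {k N : ℕ} (c : ℝ) : SacPoly k N (fun _ => c) :=
  ⟨MvPolynomial.C c, by simp, fun t => by simp⟩

theorem SacPoly.X {k : ℕ} (i : Fin k) : SacPoly k 1 (fun t => t i) :=
  ⟨MvPolynomial.X i, by simp, fun t => by simp⟩

theorem SacPoly.pow {k N : ℕ} {f : (Fin k → ℝ) → ℝ} (hf : SacPoly k N f) (a : ℕ) :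
    SacPoly k (N * a) (fun t => f t ^ a) := by
  obtain ⟨P, h1, h2⟩ := hf
  exact ⟨P ^ a, (MvPolynomial.totalDegree_pow _ _).trans
    (by rw [mul_comm]; exact Nat.mul_le_mul_right _ h1), fun t => by simp [h2]⟩

theorem SacPoly.sum {k N : ℕ} {ι : Type*} (s : Finset ι) {f : ι → (Fin k → ℝ) → ℝ}
    (hf : ∀ i ∈ s, SacPoly k N (f i)) : SacPoly k N (fun t => ∑ i ∈ s, f i t) := by
  classical
  induction s using Finset.induction_on with
  | empty => simpa using SacPoly.const 0
  | insert a s ha ih =>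
    have := (hf a (by simp)).add (ih fun i hi => hf i (by simp [hi]))
    simpa [Finset.sum_insert ha] using this

theorem SacPoly.prod {k : ℕ} {ι : Type*} (s : Finset ι) {N : ι → ℕ} {f : ι → (Fin k → ℝ) → ℝ}
    (hf : ∀ i ∈ s, SacPoly k (N i) (f i)) :
    SacPoly k (∑ i ∈ s, N i) (fun t => ∏ i ∈ s, f i t) := by
  classical
  induction s using Finset.induction_on with
  | empty => simpa using SacPoly.const 1
  | insert a s ha ih =>
    have := (hf a (by simp)).mul (ih fun i hi => hf i (by simp [hi]))
    simpa [Finset.prod_insert ha, Finset.sum_insert ha] using this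

theorem SacPoly.mem_span {k N : ℕ} {f : (Fin k → ℝ) → ℝ} (hf : SacPoly k N f) :
    f ∈ Submodule.span ℝ (Set.range fun (a : Fin k → Fin (N + 1)) (t : Fin k → ℝ) =>
      ∏ i, t i ^ (a i : ℕ)) := by
  obtain ⟨P, h1, h2⟩ := hf
  have : f = ∑ m ∈ P.support, P.coeff m • fun t : Fin k → ℝ => ∏ i, t i ^ (m i) := by
    ext t
    rw [← h2, MvPolynomial.eval_eq']
    simp
  rw [this]
  refine Submodule.sum_mem _ fun m hm => Submodule.smul_mem _ _ (Submodule.subset_span ?_)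
  have hle : ∀ i, m i < N + 1 := by
    intro i
    have := (MvPolynomial.monomial_le_degreeOf i hm).trans
      ((MvPolynomial.degreeOf_le_totalDegree P i).trans h1)
    omega
  exact ⟨fun i => ⟨m i, hle i⟩, rfl⟩

theorem sac_relation (k D N : ℕ) (hN : N = (2 * D * k + 2) ^ k)
    (q : (Fin k → ℝ) → (Fin k → ℝ)) (w : (Fin k → ℝ) → ℝ) (hw0 : ∀ t, w t ≠ 0)
    (hw : SacPoly k 2 w) (hq : ∀ i, SacPoly k (2 * D) (fun t => w t ^ D * q t i)) (j : Fin k) :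
    ∃ g : (Fin k → Fin (N + 1)) × Fin (N + 1) → ℝ, (∃ z, g z ≠ 0) ∧
      ∀ t, ∑ z, g z * ((∏ i, q t i ^ (z.1 i : ℕ)) * t j ^ (z.2 : ℕ)) = 0 := by
  classical
  set M := ∑ i : Fin k, (2 * D * N) + N with hM
  let v : (Fin k → Fin (N + 1)) × Fin (N + 1) → ((Fin k → ℝ) → ℝ) := fun z t =>
    (∏ i, ((w t ^ D * q t i) ^ (z.1 i : ℕ) * w t ^ (D * (N - z.1 i)))) * t j ^ (z.2 : ℕ)
  have hv : ∀ z, SacPoly k M (v z) := by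
    intro z
    refine SacPoly.mul (SacPoly.prod _ fun i _ => ?_) (((SacPoly.X j).pow _).mono ?_)
    · refine (((hq i).pow _).mul (hw.pow _)).mono ?_
      have : (z.1 i : ℕ) ≤ N := by omega
      obtain ⟨c, hc⟩ := Nat.exists_eq_add_of_le this
      have e : N - z.1 i = c := by omega
      rw [e]
      refine le_of_eq (Eq.trans (by ring) (congrArg (fun x => 2 * D * x) hc.symm))
    · omega
  have hvw : ∀ z t, v z t = w t ^ (D * N * k) * ((∏ i, q t i ^ (z.1 i : ℕ)) * t j ^ (z.2 : ℕ)) := by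
    intro z t
    have h1 : ∀ i, (w t ^ D * q t i) ^ (z.1 i : ℕ) * w t ^ (D * (N - z.1 i)) =
        w t ^ (D * N) * q t i ^ (z.1 i : ℕ) := by
      intro i
      have : (z.1 i : ℕ) ≤ N := by omega
      obtain ⟨c, hc⟩ := Nat.exists_eq_add_of_le this
      have e : N - z.1 i = c := by omega
      have hDN : D * N = D * z.1 i + D * c := by
        rw [← mul_add]; exact congrArg (fun x => D * x) hc
      rw [e, hDN, mul_pow, ← pow_mul, pow_add]; ring
    simp only [v]
    rw [Finset.prod_congr rfl (fun i _ => h1 i), Finset.prod_mul_distrib, Finset.prod_const,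
      Finset.card_univ, Fintype.card_fin, ← pow_mul, mul_assoc]
  have hli : ¬ LinearIndependent ℝ v := by
    intro hli
    have h1 := linearIndependent_le_span_aux' v hli (Set.range fun (a : Fin k → Fin (M + 1))
      (t : Fin k → ℝ) => ∏ i, t i ^ (a i : ℕ)) (by rintro _ ⟨z, rfl⟩; exact (hv z).mem_span)
    have h2 := h1.trans (Fintype.card_le_of_surjective _
      (Set.rangeFactorization_surjective (f := fun (a : Fin k → Fin (M + 1))
        (t : Fin k → ℝ) => ∏ i, t i ^ (a i : ℕ))))
    simp only [Fintype.card_prod, Fintype.card_pi, Fintype.card_fin, Finset.prod_const,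
      Finset.card_univ] at h2
    have h3 : M + 1 ≤ (N + 1) * (2 * D * k + 2) := by
      rw [hM]; simp; nlinarith
    have h4 : (M + 1) ^ k ≤ (N + 1) ^ k * N := by
      calc _ ≤ ((N + 1) * (2 * D * k + 2)) ^ k := Nat.pow_le_pow_left h3 k
        _ = _ := by rw [mul_pow, ← hN]
    have h5 : (N + 1) ^ k * N < (N + 1) ^ k * (N + 1) :=
      Nat.mul_lt_mul_of_pos_left (Nat.lt_succ_self _) (by positivity)
    omega
  obtain ⟨g, hg, hz⟩ := Fintype.not_linearIndependent_iff.1 hli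
  refine ⟨g, hz, fun t => ?_⟩
  have h1 := congrFun hg t
  simp only [Finset.sum_apply, Pi.smul_apply, smul_eq_mul, Pi.zero_apply] at h1
  have h2 : w t ^ (D * N * k) *
      ∑ z, g z * ((∏ i, q t i ^ (z.1 i : ℕ)) * t j ^ (z.2 : ℕ)) = 0 := by
    rw [← h1, Finset.mul_sum]
    refine Finset.sum_congr rfl fun z _ => ?_
    rw [hvw]; ring
  exact (mul_eq_zero.1 h2).resolve_left (pow_ne_zero _ (hw0 t))

theorem sac_mult (k D N : ℕ) (hN : N = (2 * D * k + 2) ^ k)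
    (q : (Fin k → ℝ) → (Fin k → ℝ)) (w : (Fin k → ℝ) → ℝ) (hw0 : ∀ t, w t ≠ 0)
    (hw : SacPoly k 2 w) (hq : ∀ i, SacPoly k (2 * D) (fun t => w t ^ D * q t i)) :
    ∀ᵐ u, (q ⁻¹' {u}).encard ≤ (N ^ k : ℕ) := by
  classical
  have H : ∀ j : Fin k, ∀ᵐ u : Fin k → ℝ, ∃ F : Finset ℝ, F.card ≤ N ∧ ∀ t, q t = u → t j ∈ F := by
    intro j
    obtain ⟨g, ⟨⟨a0, b0⟩, hz⟩, hg⟩ := sac_relation k D N hN q w hw0 hw hq j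
    let mo : (Fin k → Fin (N + 1)) → (Fin k →₀ ℕ) := fun a =>
      Finsupp.equivFunOnFinite.symm fun i => (a i : ℕ)
    have hmo : Function.Injective mo := by
      intro a b hab
      have := Finsupp.equivFunOnFinite.symm.injective hab
      ext i
      exact congrFun this i
    set P : MvPolynomial (Fin k) ℝ := ∑ a, MvPolynomial.monomial (mo a) (g (a, b0)) with hP
    have hP0 : P ≠ 0 := by
      intro h0
      apply hz
      have : P.coeff (mo a0) = g (a0, b0) := by
        rw [hP, MvPolynomial.coeff_sum]
        simp only [MvPolynomial.coeff_monomial, hmo.eq_iff]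
        simp
      rw [← this, h0, MvPolynomial.coeff_zero]
    filter_upwards [sac_null k P hP0] with u hu
    have hPe : MvPolynomial.eval u P = ∑ a, g (a, b0) * ∏ i, u i ^ (a i : ℕ) := by
      rw [hP, map_sum]
      refine Finset.sum_congr rfl fun a _ => ?_
      rw [MvPolynomial.eval_monomial, Finsupp.prod_fintype _ _ (by simp)]
      rfl
    set R : Polynomial ℝ := ∑ b : Fin (N + 1), Polynomial.monomial (b : ℕ)
      (∑ a, g (a, b) * ∏ i, u i ^ (a i : ℕ)) with hR
    have hRc : R.coeff (b0 : ℕ) = ∑ a, g (a, b0) * ∏ i, u i ^ (a i : ℕ) := by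
      rw [hR, Polynomial.finsetSum_coeff]
      simp only [Polynomial.coeff_monomial, Fin.val_inj]
      simp
    have hR0 : R ≠ 0 := by
      intro h0
      apply hu
      rw [hPe, ← hRc, h0, Polynomial.coeff_zero]
    have hRd : R.natDegree ≤ N := by
      refine Polynomial.natDegree_sum_le_of_forall_le _ _ fun b _ => ?_
      exact (Polynomial.natDegree_monomial_le _).trans (by omega)
    refine ⟨R.roots.toFinset, (Multiset.toFinset_card_le _).trans
      ((Polynomial.card_roots' R).trans hRd), fun t ht => ?_⟩
    rw [Multiset.mem_toFinset, Polynomial.mem_roots hR0, Polynomial.IsRoot, hR,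
      Polynomial.eval_finsetSum, ← hg t, Fintype.sum_prod_type_right]
    refine Finset.sum_congr rfl fun b _ => ?_
    rw [Polynomial.eval_monomial, Finset.sum_mul, ht]
    refine Finset.sum_congr rfl fun a _ => ?_
    ring
  filter_upwards [ae_all_iff.2 H] with u hu
  choose F hF hFt using hu
  calc (q ⁻¹' {u}).encard ≤ ((Fintype.piFinset F : Finset (Fin k → ℝ)) : Set (Fin k → ℝ)).encard := by
        refine Set.encard_le_encard fun t ht => ?_
        simp only [Finset.mem_coe, Fintype.mem_piFinset]
        exact fun j => hFt j t ht
    _ = ((Fintype.piFinset F).card : ℕ∞) := Set.encard_coe_eq_coe_finsetCard _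
    _ ≤ _ := by
      rw [Fintype.card_piFinset]
      norm_cast
      calc _ ≤ ∏ _i : Fin k, N := Finset.prod_le_prod' fun i _ => hF i
        _ = N ^ k := by simp


theorem sac_core (k D : ℕ) (A : ℝ) (hA : 0 < A) : ∃ C : ℝ, 0 < C ∧
    ∀ (q : (Fin k → ℝ) → (Fin k → ℝ)) (q' : (Fin k → ℝ) → (Fin k → ℝ) →L[ℝ] (Fin k → ℝ)),
    (∀ t, HasFDerivAt q (q' t) t) → (Measurable fun t => (q' t).det) →
    (∀ i, SacPoly k (2 * D) (fun t => (1 + ∑ l, t l ^ 2) ^ D * q t i)) →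
    ∀ ε : ℝ, 0 < ε → ε < 1 / 2 →
    volume {t : Fin k → ℝ | t ∈ Set.Icc (0 : Fin k → ℝ) 1 ∧
      ∏ i, |q t i| < A * ε * |(q' t).det|} ≤ ENNReal.ofReal (C * ε * Real.log (1 / ε) ^ k) := by
  obtain ⟨U₀, c, K, hU₀, hc, hK, H⟩ := sac_small_ball (2 * D) k
  obtain ⟨N, hN⟩ : ∃ N : ℕ, N = (2 * D * k + 2) ^ k := ⟨_, rfl⟩
  set U := max U₀ c with hU
  have hUc : c ≤ U := le_max_right _ _
  have hU0 : 0 < U := hc.trans_le hUc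
  set W : ℝ := (1 + k) ^ D with hW
  have hW1 : 1 ≤ W := one_le_pow₀ (by simp)
  have hW0 : 0 < W := one_pos.trans_le hW1
  set e := 2 * D * k with he
  have hl2 : 0 < Real.log 2 := Real.log_pos (by norm_num)
  set G := Real.log (U * W / c) / Real.log 2 + e with hG
  have hUW : 1 ≤ U * W / c := by
    rw [one_le_div hc]
    exact hUc.trans (le_mul_of_one_le_right hU0.le hW1)
  have hG0 : 0 ≤ G := by
    have := Real.log_nonneg hUW
    positivity
  refine ⟨k * K / Real.log 2 ^ k + A * (N ^ k : ℕ) * (2 * G) ^ k + 1, by positivity, ?_⟩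
  intro q q' hq hdet hP ε hε hε2
  have hε1 : ε ≤ 1 := by linarith
  set L := Real.log (1 / ε) with hL
  have hL2 : Real.log 2 ≤ L := by
    apply Real.log_le_log (by norm_num)
    rw [le_div_iff₀ hε]; linarith
  have hL0 : 0 < L := hl2.trans_le hL2
  set w : (Fin k → ℝ) → ℝ := fun t => 1 + ∑ l, t l ^ 2 with hw
  have hw1 : ∀ t, 1 ≤ w t := fun t => by
    have : 0 ≤ ∑ l, t l ^ 2 := Finset.sum_nonneg fun i _ => sq_nonneg _
    simp only [hw]; linarith
  have hwP : SacPoly k 2 w := by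
    refine (SacPoly.const 1).add (SacPoly.sum _ fun i _ => ?_)
    exact (SacPoly.X i).pow 2
  choose P hPd hPe using hP
  have hqc : Continuous q := continuous_iff_continuousAt.2 fun t => (hq t).continuousAt
  by_cases hP0 : ∃ i, P i = 0
  · obtain ⟨i, hi⟩ := hP0
    have hqi : ∀ t, q t i = 0 := by
      intro t
      have := hPe i t
      rw [hi, map_zero] at this
      exact (mul_eq_zero.1 this.symm).resolve_left
        (pow_ne_zero _ (one_pos.trans_le (hw1 t)).ne')
    have hd0 : ∀ t, (q' t).det = 0 := by
      intro t
      by_contra hne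
      have hs := ((q' t).toContinuousLinearEquivOfDetNeZero hne).surjective (Pi.single i 1)
      obtain ⟨v, hv⟩ := hs
      have h1 : HasFDerivAt (fun t => q t i)
          ((ContinuousLinearMap.proj (R := ℝ) (φ := fun _ : Fin k => ℝ) i).comp (q' t)) t :=
        (hasFDerivAt_pi'.1 (hq t)) i
      have h2 : (fun t => q t i) = fun _ => 0 := funext hqi
      rw [h2] at h1
      have h3 := h1.unique (hasFDerivAt_const 0 t)
      have h4 := congrArg (fun T => T v) h3
      have hv' : q' t v = Pi.single i 1 := by simpa using hv
      simp [hv'] at h4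
    have : {t : Fin k → ℝ | t ∈ Set.Icc (0 : Fin k → ℝ) 1 ∧
        ∏ i, |q t i| < A * ε * |(q' t).det|} = ∅ := by
      ext t
      simp only [Set.mem_ofPred_eq, Set.mem_empty_iff_false, iff_false, not_and, not_lt, hd0,
        abs_zero, mul_zero]
      exact fun _ => Finset.prod_nonneg fun i _ => abs_nonneg _
    rw [this]; simp
  push Not at hP0
  have HP : ∀ i, _ := fun i => H (P i)
    (fun l => (MvPolynomial.degreeOf_le_totalDegree _ _).trans (hPd i)) (hP0 i)
  choose σ hσ hσU hσK using HP
  have hwD : ∀ t, 1 ≤ w t ^ D := fun t => one_le_pow₀ (hw1 t)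
  have hwW : ∀ t ∈ Set.Icc (0 : Fin k → ℝ) 1, w t ^ D ≤ W := by
    intro t ht
    refine pow_le_pow_left₀ (one_pos.trans_le (hw1 t)).le ?_ D
    simp only [hw]
    gcongr
    calc ∑ l, t l ^ 2 ≤ ∑ _l : Fin k, (1 : ℝ) :=
          Finset.sum_le_sum fun l _ => pow_le_one₀ (ht.1 l) (ht.2 l)
      _ = k := by simp
  have hPq : ∀ i t, |MvPolynomial.eval t (P i)| = w t ^ D * |q t i| := by
    intro i t
    rw [hPe, abs_mul, abs_of_pos (one_pos.trans_le (hwD t))]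
  set a : Fin k → ℝ := fun i => c / W * ε ^ e * σ i with ha
  set b : Fin k → ℝ := fun i => U * σ i with hb
  have ha0 : ∀ i, 0 < a i := fun i => by have := hσ i; simp only [ha]; positivity
  have hab : ∀ i, a i ≤ b i := by
    intro i
    have h1 := hσ i
    simp only [ha, hb]
    gcongr
    calc c / W * ε ^ e ≤ c / W * 1 := by gcongr; exact pow_le_one₀ hε.le hε1
      _ ≤ c := by rw [mul_one]; exact div_le_self hc.le hW1
      _ ≤ U := hUc
  set S : Set (Fin k → ℝ) := {t | t ∈ Set.Icc (0 : Fin k → ℝ) 1 ∧ (∀ i, a i ≤ |q t i|) ∧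
    ∏ i, |q t i| < A * ε * |(q' t).det|} with hS
  have hqim : ∀ i, Measurable fun t => |q t i| := fun i =>
    (((continuous_apply i).comp hqc).abs).measurable
  have hSm : MeasurableSet S := by
    refine measurableSet_Icc.inter (MeasurableSet.inter ?_ ?_)
    · have : {t | ∀ i, a i ≤ |q t i|} = ⋂ i, {t | a i ≤ |q t i|} := by ext; simp
      have hm1 : MeasurableSet {t | ∀ i, a i ≤ |q t i|} := by
        rw [this]
        exact MeasurableSet.iInter fun i => measurableSet_le measurable_const (hqim i)
      exact hm1
    · exact measurableSet_lt (Finset.measurable_prod _ fun i _ => hqim i)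
        (measurable_const.mul (continuous_abs.measurable.comp hdet))
  set B : Fin k → Set (Fin k → ℝ) := fun i => {t | t ∈ Set.Icc (0 : Fin k → ℝ) 1 ∧
    |MvPolynomial.eval t (P i)| < c * ε ^ e * σ i} with hB
  have hsub : {t : Fin k → ℝ | t ∈ Set.Icc (0 : Fin k → ℝ) 1 ∧
      ∏ i, |q t i| < A * ε * |(q' t).det|} ⊆ S ∪ ⋃ i, B i := by
    rintro t ⟨ht, htq⟩
    by_cases hall : ∀ i, a i ≤ |q t i|
    · left; exact ⟨ht, hall, htq⟩
    · right
      push Not at hall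
      obtain ⟨i, hi⟩ := hall
      refine Set.mem_iUnion.2 ⟨i, ht, ?_⟩
      rw [hPq]
      calc w t ^ D * |q t i| ≤ W * |q t i| := by gcongr; exact hwW t ht
        _ < W * a i := by gcongr
        _ = _ := by simp only [ha]; field_simp
  have hvB : volume (⋃ i, B i) ≤ ENNReal.ofReal (k * K * ε) := by
    calc _ ≤ ∑ i, volume (B i) := measure_iUnion_fintype_le _ _
      _ ≤ ∑ _i : Fin k, ENNReal.ofReal (K * ε) := Finset.sum_le_sum fun i _ => hσK i ε hε hε1
      _ = _ := by
        rw [← ENNReal.ofReal_sum_of_nonneg (fun _ _ => by positivity)]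
        congr 1; simp; ring
  set h : Fin k → ℝ → ENNReal := fun i =>
    {x : ℝ | a i ≤ |x| ∧ |x| ≤ b i}.indicator (fun x => ENNReal.ofReal (1 / |x|)) with hh
  have hhm : ∀ i, Measurable (h i) := by
    intro i
    refine Measurable.indicator ?_ ?_
    · exact ENNReal.measurable_ofReal.comp (measurable_const.div continuous_abs.measurable)
    · exact (measurableSet_le measurable_const continuous_abs.measurable).inter
        (measurableSet_le continuous_abs.measurable measurable_const)
  have hpm : Measurable fun u : Fin k → ℝ => ∏ i, h i (u i) :=
    Finset.measurable_prod _ fun i _ => (hhm i).comp (measurable_pi_apply i)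
  set g : (Fin k → ℝ) → ENNReal := fun u => ENNReal.ofReal (A * ε) * ∏ i, h i (u i) with hg
  have hgm : Measurable g := measurable_const.mul hpm
  have hgi : ∫⁻ u, g u ≤ ENNReal.ofReal (A * ε * (2 * (G * L)) ^ k) := by
    simp only [hg]
    rw [lintegral_const_mul _ hpm, sac_lintegral_prod k h hhm,
      ENNReal.ofReal_mul (p := A * ε) (by positivity)]
    refine mul_le_mul' le_rfl ?_
    calc ∏ i, ∫⁻ x, h i x ≤ ∏ _i : Fin k, ENNReal.ofReal (2 * (G * L)) := by
          refine Finset.prod_le_prod' fun i _ => ?_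
          refine (sac_log_int (a i) (b i) (ha0 i) (hab i)).trans (ENNReal.ofReal_le_ofReal ?_)
          gcongr
          have h1 : b i / a i = U * W / c * (1 / ε) ^ e := by
            have := hσ i
            simp only [ha, hb]; rw [one_div, inv_pow]; field_simp
          rw [h1, Real.log_mul (by positivity) (by positivity), Real.log_pow, ← hL, hG, add_mul]
          gcongr
          rw [div_mul_eq_mul_div, le_div_iff₀ hl2]
          exact mul_le_mul_of_nonneg_left hL2 (Real.log_nonneg hUW)
      _ = _ := by
          rw [Finset.prod_const, Finset.card_univ, Fintype.card_fin, ENNReal.ofReal_pow (by positivity)]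
  have hvS : volume S ≤ ENNReal.ofReal ((N ^ k : ℕ) * (A * ε * (2 * (G * L)) ^ k)) := by
    calc volume S = ∫⁻ _t in S, 1 := by simp
      _ ≤ ∫⁻ t in S, ENNReal.ofReal |(q' t).det| * g (q t) := by
        refine setLIntegral_mono' hSm fun t ht => ?_
        obtain ⟨ht1, ht2, ht3⟩ := ht
        have hqp : ∀ i, 0 < |q t i| := fun i => (ha0 i).trans_le (ht2 i)
        have h1 : ∀ i, h i (q t i) = ENNReal.ofReal (1 / |q t i|) := by
          intro i
          simp only [hh]
          suffices hmem : q t i ∈ {x : ℝ | a i ≤ |x| ∧ |x| ≤ b i} from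
            Set.indicator_of_mem hmem _
          refine ⟨ht2 i, ?_⟩
          have h2 := hσU i t ht1
          rw [hPq] at h2
          calc |q t i| ≤ w t ^ D * |q t i| := le_mul_of_one_le_left (abs_nonneg _) (hwD t)
            _ ≤ U₀ * σ i := h2
            _ ≤ U * σ i := mul_le_mul_of_nonneg_right (le_max_left _ _) (hσ i).le
        have hpp : 0 < ∏ i, |q t i| := Finset.prod_pos fun i _ => hqp i
        simp only [hg]
        rw [Finset.prod_congr rfl (fun i _ => h1 i),
          ← ENNReal.ofReal_prod_of_nonneg (fun i _ => by positivity),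
          ← ENNReal.ofReal_mul (by positivity), ← ENNReal.ofReal_mul (by positivity),
          ← ENNReal.ofReal_one]
        apply ENNReal.ofReal_le_ofReal
        rw [Finset.prod_div_distrib, Finset.prod_const_one]
        have : |(q' t).det| * (A * ε * (1 / ∏ i, |q t i|)) =
          (A * ε * |(q' t).det|) / ∏ i, |q t i| := by ring
        rw [this, one_le_div hpp]
        exact ht3.le
      _ ≤ (N ^ k : ℕ) * ∫⁻ u, g u := sac_area S hSm q q' hq hdet (N ^ k)
          (sac_mult k D N hN q w (fun t => (one_pos.trans_le (hw1 t)).ne') hwP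
            (fun i => ⟨P i, hPd i, hPe i⟩)) g hgm
      _ ≤ (N ^ k : ℕ) * ENNReal.ofReal (A * ε * (2 * (G * L)) ^ k) := by gcongr
      _ = _ := by
        rw [ENNReal.ofReal_mul (p := ((N ^ k : ℕ) : ℝ)) (by positivity), ENNReal.ofReal_natCast]
  calc _ ≤ volume (S ∪ ⋃ i, B i) := measure_mono hsub
    _ ≤ volume S + volume (⋃ i, B i) := measure_union_le _ _
    _ ≤ _ := add_le_add hvS hvB
    _ ≤ _ := by
      rw [← ENNReal.ofReal_add (by positivity) (by positivity)]
      apply ENNReal.ofReal_le_ofReal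
      have h1 : 1 ≤ (L / Real.log 2) ^ k := one_le_pow₀ ((one_le_div hl2).2 hL2)
      have h2 : k * K * ε ≤ k * K * ε * (L / Real.log 2) ^ k :=
        le_mul_of_one_le_right (by positivity) h1
      have h3 : 0 ≤ ε * L ^ k := by positivity
      have h4 : (k * K / Real.log 2 ^ k + A * (N ^ k : ℕ) * (2 * G) ^ k + 1) * ε * L ^ k =
        k * K * ε * (L / Real.log 2) ^ k + (N ^ k : ℕ) * (A * ε * (2 * (G * L)) ^ k)
          + ε * L ^ k := by
        rw [div_pow, mul_pow, mul_pow, mul_pow]; ring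
      rw [h4]; linarith


/-- First component of the reflection. -/
noncomputable def sacX {n k : ℕ} (t : Fin k → ℝ) (z : (Fin n → ℝ) × (Fin k → Fin n → ℝ)) :
    Fin n → ℝ :=
  fun l => ((∑ i, t i ^ 2 - 1) * z.1 l - 2 * ∑ i, t i * z.2 i l) / (1 + ∑ i, t i ^ 2)

/-- Other components of the reflection. -/
noncomputable def sacY {n k : ℕ} (t : Fin k → ℝ) (z : (Fin n → ℝ) × (Fin k → Fin n → ℝ)) :
    Fin k → Fin n → ℝ :=
  fun i l => z.2 i l - 2 * t i * (z.1 l + ∑ j, t j * z.2 j l) / (1 + ∑ i, t i ^ 2)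

/-- The reflection as a linear map. -/
noncomputable def sacT {n k : ℕ} (t : Fin k → ℝ) :
    ((Fin n → ℝ) × (Fin k → Fin n → ℝ)) →ₗ[ℝ] ((Fin n → ℝ) × (Fin k → Fin n → ℝ)) where
  toFun z := (sacX t z, sacY t z)
  map_add' x y := by
    ext
    · simp only [sacX, Prod.fst_add, Prod.snd_add, Pi.add_apply, mul_add, Finset.sum_add_distrib]
      ring
    · simp only [sacY, Prod.fst_add, Prod.snd_add, Pi.add_apply, mul_add, Finset.sum_add_distrib]
      ring
  map_smul' c x := by
    ext
    · simp only [sacX, Prod.smul_fst, Prod.smul_snd, Pi.smul_apply, smul_eq_mul, RingHom.id_apply,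
        mul_left_comm _ c, ← Finset.mul_sum]
      ring
    · simp only [sacY, Prod.smul_fst, Prod.smul_snd, Pi.smul_apply, smul_eq_mul, RingHom.id_apply,
        mul_left_comm _ c, ← Finset.mul_sum]
      ring

instance sacGaussianProb (n : ℕ) : IsProbabilityMeasure (_root_.stdGaussian n) := by
  unfold _root_.stdGaussian; infer_instance

theorem sac_char_real (L : StrongDual ℝ ℝ) :
    charFunDual (gaussianReal 0 1) L = Complex.exp (-((L 1 : ℝ) ^ 2 / 2 : ℝ)) := by
  have : charFunDual (gaussianReal 0 1) L = charFun (gaussianReal 0 1) (L 1) := by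
    rw [charFunDual_apply, charFun_apply_real]
    congr 1
    ext x
    have : L x = L 1 * x := by
      have := L.map_smul x 1
      simp only [smul_eq_mul, mul_one] at this
      rw [this, mul_comm]
    rw [this]; push_cast; rfl
  rw [this, charFun_gaussianReal]
  congr 1
  push_cast
  simp

theorem sac_char_std (n : ℕ) (L : StrongDual ℝ (Fin n → ℝ)) :
    charFunDual (_root_.stdGaussian n) L =
      Complex.exp (-((∑ l, (L (Pi.single l 1)) ^ 2) / 2 : ℝ)) := by
  unfold _root_.stdGaussian
  rw [charFunDual_pi]
  simp only [sac_char_real]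
  rw [← Complex.exp_sum]
  congr 1
  rw [Finset.sum_neg_distrib, Finset.sum_div]
  push_cast
  rfl

theorem sac_char_all (n k : ℕ) (L : StrongDual ℝ ((Fin n → ℝ) × (Fin k → Fin n → ℝ))) :
    charFunDual ((_root_.stdGaussian n).prod (Measure.pi fun _ : Fin k => _root_.stdGaussian n)) L =
      Complex.exp (-((∑ l, ((L (Pi.single l 1, 0)) ^ 2 +
        ∑ i, (L (0, Pi.single i (Pi.single l 1))) ^ 2)) / 2 : ℝ)) := by
  rw [charFunDual_prod, charFunDual_pi]
  simp only [sac_char_std]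
  rw [← Complex.exp_sum, ← Complex.exp_add]
  congr 1
  rw [Finset.sum_add_distrib, Finset.sum_comm (γ := Fin n), Finset.sum_neg_distrib]
  push_cast
  rw [add_div, neg_add, ← Finset.sum_div]
  rfl

theorem sac_quad {k : ℕ} (t b : Fin k → ℝ) (a : ℝ) :
    (((∑ i, t i ^ 2 - 1) * a - 2 * ∑ i, t i * b i) / (1 + ∑ i, t i ^ 2)) ^ 2 +
      ∑ i, (b i - 2 * t i * (a + ∑ j, t j * b j) / (1 + ∑ i, t i ^ 2)) ^ 2 =
    a ^ 2 + ∑ i, b i ^ 2 := by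
  set s := ∑ i, t i ^ 2 with hs
  set β := ∑ i, t i * b i with hβ
  have hs0 : 0 ≤ s := Finset.sum_nonneg fun i _ => sq_nonneg _
  have h1 : ∑ i, (b i - 2 * t i * (a + β) / (1 + s)) ^ 2 =
      ∑ i, b i ^ 2 - 4 * (a + β) / (1 + s) * β + (2 * (a + β) / (1 + s)) ^ 2 * s := by
    rw [hβ, hs, Finset.mul_sum, Finset.mul_sum, ← Finset.sum_sub_distrib, ← Finset.sum_add_distrib]
    refine Finset.sum_congr rfl fun i _ => ?_
    ring
  rw [h1]
  have : (1 + s) ≠ 0 := by positivity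
  field_simp
  ring

theorem sac_expand {n k : ℕ} (L : StrongDual ℝ ((Fin n → ℝ) × (Fin k → Fin n → ℝ)))
    (z : (Fin n → ℝ) × (Fin k → Fin n → ℝ)) :
    L z = ∑ l, (z.1 l * L (Pi.single l 1, 0) +
      ∑ i, z.2 i l * L (0, Pi.single i (Pi.single l 1))) := by
  have h : z = ∑ l, (z.1 l • ((Pi.single l 1 : Fin n → ℝ), (0 : Fin k → Fin n → ℝ)) +
      ∑ i, z.2 i l • ((0 : Fin n → ℝ), (Pi.single i (Pi.single l 1) : Fin k → Fin n → ℝ))) := by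
    ext
    · simp [Prod.fst_sum, Finset.sum_apply, Pi.single_apply]
    · simp [Prod.snd_sum, Finset.sum_apply, Pi.single_apply, apply_ite]
  conv_lhs => rw [h]
  simp only [map_sum, map_add, map_smul, smul_eq_mul]

theorem sac_invariant {n k : ℕ} (t : Fin k → ℝ) :
    ((_root_.stdGaussian n).prod (Measure.pi fun _ : Fin k => _root_.stdGaussian n)).map
      (fun z => (sacX t z, sacY t z)) =
    (_root_.stdGaussian n).prod (Measure.pi fun _ : Fin k => _root_.stdGaussian n) := by
  set μ := (_root_.stdGaussian n).prod (Measure.pi fun _ : Fin k => _root_.stdGaussian n) with hμ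
  set T := LinearMap.toContinuousLinearMap (sacT (n := n) t) with hT
  have hTf : (fun z => (sacX t z, sacY t z)) = (T : _ → _) := rfl
  rw [hTf]
  have : IsProbabilityMeasure (μ.map T) :=
    Measure.isProbabilityMeasure_map T.continuous.measurable.aemeasurable
  apply Measure.ext_of_charFunDual
  ext L
  rw [charFunDual_map, hμ, sac_char_all, sac_char_all]
  have key : ∀ l, (L.comp T) (Pi.single l 1, 0) ^ 2 +
        ∑ i, (L.comp T) (0, Pi.single i (Pi.single l 1)) ^ 2 =
      L (Pi.single l 1, 0) ^ 2 + ∑ i, L (0, Pi.single i (Pi.single l 1)) ^ 2 := by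
    intro l
    rw [← sac_quad t (fun i => L (0, Pi.single i (Pi.single l 1))) (L (Pi.single l 1, 0))]
    have h1 : (L.comp T) (Pi.single l 1, 0) = ((∑ i, t i ^ 2 - 1) * L (Pi.single l 1, 0) -
        2 * ∑ i, t i * L (0, Pi.single i (Pi.single l 1))) / (1 + ∑ i, t i ^ 2) := by
      rw [ContinuousLinearMap.comp_apply, sac_expand]
      rw [Finset.sum_eq_single l]
      · change sacX t _ l * _ + ∑ i, sacY t _ i l * _ = _
        simp only [sacX, sacY, Pi.single_eq_same, Pi.zero_apply, mul_zero, Finset.sum_const_zero]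
        have h6 : ∑ x, (0 - 2 * t x * (1 + 0) / (1 + ∑ i, t i ^ 2)) *
            L (0, Pi.single x (Pi.single l 1)) = -(2 / (1 + ∑ i, t i ^ 2)) *
            ∑ j, t j * L (0, Pi.single j (Pi.single l 1)) := by
          rw [Finset.mul_sum]
          exact Finset.sum_congr rfl fun j _ => by ring
        rw [h6]
        ring
      · intro m _ hm
        change sacX t _ m * _ + ∑ i, sacY t _ i m * _ = _
        simp [sacX, sacY, hm]
      · simp
    have h2 : ∀ i, (L.comp T) (0, Pi.single i (Pi.single l 1)) =
        L (0, Pi.single i (Pi.single l 1)) - 2 * t i * (L (Pi.single l 1, 0) +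
        ∑ j, t j * L (0, Pi.single j (Pi.single l 1))) / (1 + ∑ i, t i ^ 2) := by
      intro i
      rw [ContinuousLinearMap.comp_apply, sac_expand]
      have hsum : ∀ m, ∑ j, t j * (Pi.single i (Pi.single l 1) : Fin k → Fin n → ℝ) j m =
          t i * (Pi.single l 1 : Fin n → ℝ) m := by
        intro m
        rw [Finset.sum_eq_single i]
        · simp
        · intro j _ hj; simp [hj]
        · simp
      rw [Finset.sum_eq_single l]
      · change sacX t _ l * _ + ∑ j, sacY t _ j l * _ = _
        simp only [sacX, sacY, hsum, Pi.single_eq_same, Pi.zero_apply, mul_zero, sub_mul,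
          Finset.sum_sub_distrib]
        have h3 : ∑ j, (Pi.single i (Pi.single l 1) : Fin k → Fin n → ℝ) j l *
            L (0, Pi.single j (Pi.single l 1)) = L (0, Pi.single i (Pi.single l 1)) := by
          rw [Finset.sum_eq_single i]
          · simp
          · intro j _ hj; simp [hj]
          · simp
        rw [h3]
        have h4 : ∑ j, 2 * t j * (0 + t i * 1) / (1 + ∑ i, t i ^ 2) *
            L (0, Pi.single j (Pi.single l 1)) = 2 * t i / (1 + ∑ i, t i ^ 2) *
            ∑ j, t j * L (0, Pi.single j (Pi.single l 1)) := by
          rw [Finset.mul_sum]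
          exact Finset.sum_congr rfl fun j _ => by ring
        rw [h4]
        ring
      · intro m _ hm
        change sacX t _ m * _ + ∑ j, sacY t _ j m * _ = _
        simp only [sacX, sacY, hsum]
        have h5 : ∀ j, (Pi.single i (Pi.single l 1) : Fin k → Fin n → ℝ) j m = 0 := by
          intro j
          by_cases hj : j = i
          · subst hj; simp [hm]
          · simp [hj]
        simp [hm, h5]
      · simp
    simp only [h1, h2]
  simp only [key]


theorem sac_eval_deriv {n : ℕ} (p : MvPolynomial (Fin n) ℝ) (x : Fin n → ℝ) :
    HasFDerivAt (fun x => MvPolynomial.eval x p)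
      (∑ l, MvPolynomial.eval x (MvPolynomial.pderiv l p) •
        (ContinuousLinearMap.proj l : (Fin n → ℝ) →L[ℝ] ℝ)) x := by
  induction p using MvPolynomial.induction_on with
  | C a => simpa using hasFDerivAt_const a x
  | add p q hp hq =>
    have h := hp.fun_add hq
    simp only [map_add, add_smul, Finset.sum_add_distrib]
    exact h
  | mul_X p i hp =>
    have h := hp.mul (hasFDerivAt_apply (𝕜 := ℝ) i x)
    simp only [map_mul, MvPolynomial.eval_X]
    refine h.congr_fderiv ?_
    ext v
    simp only [Derivation.leibniz, MvPolynomial.pderiv_X, map_add, smul_eq_mul, map_mul,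
      MvPolynomial.eval_X, add_smul, Finset.sum_add_distrib, _root_.add_apply,
      _root_.smul_apply, _root_.sum_apply, ContinuousLinearMap.proj_apply]
    congr 1
    · rw [Finset.sum_eq_single i]
      · simp
      · intro j _ hj; simp [hj.symm]
      · simp
    · rw [Finset.mul_sum]
      exact Finset.sum_congr rfl fun j _ => by ring

theorem sac_s_pos {k : ℕ} (t : Fin k → ℝ) : 0 < 1 + ∑ i, t i ^ 2 := by
  have : 0 ≤ ∑ i, t i ^ 2 := Finset.sum_nonneg fun i _ => sq_nonneg _
  linarith

theorem sac_X_deriv {n k : ℕ} (z : (Fin n → ℝ) × (Fin k → Fin n → ℝ)) (t : Fin k → ℝ) :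
    HasFDerivAt (fun t => sacX t z)
      (ContinuousLinearMap.pi fun l => ∑ i, (-(2 / (1 + ∑ j, t j ^ 2)) * sacY t z i l) •
        (ContinuousLinearMap.proj i : (Fin k → ℝ) →L[ℝ] ℝ)) t := by
  rw [hasFDerivAt_pi]
  intro l
  have hs := sac_s_pos t
  have hS : HasFDerivAt (fun t : Fin k → ℝ => ∑ i, t i ^ 2)
      (∑ i, (2 * t i) • (ContinuousLinearMap.proj i : (Fin k → ℝ) →L[ℝ] ℝ)) t := by
    refine (HasFDerivAt.fun_sum fun i _ => (hasFDerivAt_apply (𝕜 := ℝ) i t).pow 2).congr_fderiv ?_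
    ext v; simp
  have hB : HasFDerivAt (fun t : Fin k → ℝ => ∑ i, t i * z.2 i l)
      (∑ i, z.2 i l • (ContinuousLinearMap.proj i : (Fin k → ℝ) →L[ℝ] ℝ)) t := by
    refine (HasFDerivAt.fun_sum fun i _ =>
      (hasFDerivAt_apply (𝕜 := ℝ) i t).mul_const (z.2 i l)).congr_fderiv ?_
    rfl
  have hN := ((hS.sub_const 1).mul_const (z.1 l)).sub (hB.const_mul 2)
  have hQ := hN.mul ((hasDerivAt_inv hs.ne').comp_hasFDerivAt t (hS.const_add 1))
  simp only [sacX, div_eq_mul_inv]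
  refine HasFDerivAt.congr_fderiv hQ ?_
  ext v
  simp only [_root_.sub_apply, _root_.smul_apply, smul_eq_mul,
    _root_.sum_apply, ContinuousLinearMap.proj_apply, sacY, Pi.sub_apply,
    _root_.add_apply, Function.comp_apply]
  set s := ∑ j, t j ^ 2
  set β := ∑ j, t j * z.2 j l
  have h1 : ∑ i, -(2 * (1 + s)⁻¹) * (z.2 i l - 2 * t i * (z.1 l + β) / (1 + s)) * v i =
      -(2 / (1 + s)) * ∑ i, z.2 i l * v i + 2 * (z.1 l + β) / (1 + s) ^ 2 * ∑ i, 2 * t i * v i := by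
    rw [Finset.mul_sum, Finset.mul_sum, ← Finset.sum_add_distrib]
    refine Finset.sum_congr rfl fun i _ => ?_
    field_simp
    ring
  rw [h1]
  field_simp
  ring

/-- The matrix of the statement. -/
noncomputable def sacM {n k : ℕ} (p : Fin k → MvPolynomial (Fin n) ℝ)
    (ω : (Fin n → ℝ) × (Fin k → Fin n → ℝ)) : Matrix (Fin k) (Fin k) ℝ :=
  Matrix.of fun i j : Fin k =>
    ∑ l, MvPolynomial.eval ω.1 (MvPolynomial.pderiv l (p j)) * ω.2 i l

/-- The derivative along the rotation. -/
noncomputable def sacQ {n k : ℕ} (p : Fin k → MvPolynomial (Fin n) ℝ)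
    (z : (Fin n → ℝ) × (Fin k → Fin n → ℝ)) (t : Fin k → ℝ) : (Fin k → ℝ) →L[ℝ] (Fin k → ℝ) :=
  LinearMap.toContinuousLinearMap (Matrix.toLin'
    ((-(2 / (1 + ∑ j, t j ^ 2))) • (sacM p (sacX t z, sacY t z)).transpose))

theorem sac_Q_det {n k : ℕ} (p : Fin k → MvPolynomial (Fin n) ℝ)
    (z : (Fin n → ℝ) × (Fin k → Fin n → ℝ)) (t : Fin k → ℝ) :
    (sacQ p z t).det = (-(2 / (1 + ∑ j, t j ^ 2))) ^ k * (sacM p (sacX t z, sacY t z)).det := by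
  unfold sacQ
  rw [ContinuousLinearMap.det, LinearMap.coe_toContinuousLinearMap, LinearMap.det_toLin',
    Matrix.det_smul, Matrix.det_transpose, Fintype.card_fin]

theorem sac_Q_deriv {n k : ℕ} (p : Fin k → MvPolynomial (Fin n) ℝ)
    (z : (Fin n → ℝ) × (Fin k → Fin n → ℝ)) (t : Fin k → ℝ) :
    HasFDerivAt (fun t j => MvPolynomial.eval (sacX t z) (p j)) (sacQ p z t) t := by
  rw [hasFDerivAt_pi']
  intro j
  have h := (sac_eval_deriv (p j) (sacX t z)).comp t (sac_X_deriv z t)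
  refine h.congr_fderiv ?_
  ext v
  simp only [sacQ, sacM, ContinuousLinearMap.comp_apply, _root_.sum_apply,
    _root_.smul_apply, ContinuousLinearMap.proj_apply, ContinuousLinearMap.pi_apply,
    LinearMap.coe_toContinuousLinearMap', Matrix.toLin'_apply, Matrix.smul_mulVec, Pi.smul_apply,
    smul_eq_mul, Matrix.mulVec, dotProduct, Matrix.transpose_apply, Matrix.of_apply]
  simp only [Finset.mul_sum, Finset.sum_mul]
  rw [Finset.sum_comm]
  exact Finset.sum_congr rfl fun i _ => Finset.sum_congr rfl fun l _ => by ring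

theorem sac_X_cont {n k : ℕ} : Continuous fun w : (Fin k → ℝ) × ((Fin n → ℝ) × (Fin k → Fin n → ℝ)) =>
    sacX w.1 w.2 := by
  unfold sacX
  refine continuous_pi fun l => ?_
  refine Continuous.div ?_ ?_ fun w => (sac_s_pos w.1).ne'
  · fun_prop
  · fun_prop

theorem sac_Y_cont {n k : ℕ} : Continuous fun w : (Fin k → ℝ) × ((Fin n → ℝ) × (Fin k → Fin n → ℝ)) =>
    sacY w.1 w.2 := by
  unfold sacY
  refine continuous_pi fun i => continuous_pi fun l => ?_
  refine Continuous.sub (by fun_prop) ?_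
  refine Continuous.div ?_ ?_ fun w => (sac_s_pos w.1).ne'
  · fun_prop
  · fun_prop

theorem sac_M_cont {n k : ℕ} (p : Fin k → MvPolynomial (Fin n) ℝ) : Continuous (sacM p) := by
  unfold sacM
  refine continuous_matrix fun i j => ?_
  simp only [Matrix.of_apply]
  refine continuous_finsetSum _ fun l _ => ?_
  refine Continuous.mul ?_ (by fun_prop)
  exact (MvPolynomial.continuous_eval _).comp continuous_fst

theorem sac_Q_meas {n k : ℕ} (p : Fin k → MvPolynomial (Fin n) ℝ)
    (z : (Fin n → ℝ) × (Fin k → Fin n → ℝ)) : Measurable fun t => (sacQ p z t).det := by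
  simp only [sac_Q_det]
  refine Continuous.measurable ?_
  refine Continuous.mul ?_ ?_
  · refine Continuous.pow (Continuous.neg ?_) k
    exact Continuous.div (by fun_prop) (by fun_prop) fun w => (sac_s_pos w).ne'
  · refine Continuous.matrix_det ((sac_M_cont p).comp ?_)
    exact (sac_X_cont.comp (Continuous.prodMk_left z)).prodMk
      (sac_Y_cont.comp (Continuous.prodMk_left z))

theorem sac_poly {n k D : ℕ} (p : MvPolynomial (Fin n) ℝ) (hp : p.totalDegree ≤ D)
    (z : (Fin n → ℝ) × (Fin k → Fin n → ℝ)) :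
    SacPoly k (2 * D) (fun t => (1 + ∑ l, t l ^ 2) ^ D * MvPolynomial.eval (sacX t z) p) := by
  have hS : SacPoly k 2 (fun t => ∑ l, t l ^ 2) :=
    SacPoly.sum _ fun i _ => (SacPoly.X i).pow 2
  have hs : SacPoly k 2 (fun t => 1 + ∑ l, t l ^ 2) := (SacPoly.const 1).add hS
  have hN : ∀ l, SacPoly k 2 (fun t => (∑ i, t i ^ 2 - 1) * z.1 l - 2 * ∑ i, t i * z.2 i l) := by
    intro l
    have h1 := ((hS.add (SacPoly.const (-1))).mul (SacPoly.const (N := 0) (z.1 l))).add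
      ((SacPoly.const (N := 0) (-2)).mul (SacPoly.sum (N := 2) Finset.univ fun i _ =>
        ((SacPoly.X i).mul (SacPoly.const (N := 1) (z.2 i l)))))
    convert h1 using 2
    ring
  have hdeg : ∀ m ∈ p.support, ∑ l, m l ≤ D := by
    intro m hm
    refine le_trans ?_ ((MvPolynomial.le_totalDegree hm).trans hp)
    rw [Finsupp.sum_fintype _ _ (fun _ => rfl)]
  have key : ∀ t, (1 + ∑ l, t l ^ 2) ^ D * MvPolynomial.eval (sacX t z) p =
      ∑ m ∈ p.support, p.coeff m * ((1 + ∑ l, t l ^ 2) ^ (D - ∑ l, m l) *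
        ∏ l, ((∑ i, t i ^ 2 - 1) * z.1 l - 2 * ∑ i, t i * z.2 i l) ^ m l) := by
    intro t
    rw [MvPolynomial.eval_eq', Finset.mul_sum]
    refine Finset.sum_congr rfl fun m hm => ?_
    have h0 := (sac_s_pos t).ne'
    simp only [sacX, div_pow, Finset.prod_div_distrib, Finset.prod_pow_eq_pow_sum]
    rw [← Nat.sub_add_cancel (hdeg m hm), pow_add, Nat.add_sub_cancel]
    field_simp
  simp only [key]
  refine SacPoly.sum _ fun m hm => ?_
  have h1 := (SacPoly.const (k := k) (N := 0) (p.coeff m)).mul ((hs.pow (D - ∑ l, m l)).mul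
    (SacPoly.prod Finset.univ fun l _ => (hN l).pow (m l)))
  refine h1.mono ?_
  rw [← Finset.mul_sum]
  have := hdeg m hm
  omega


theorem sac_bound {n k : ℕ} (p : Fin k → MvPolynomial (Fin n) ℝ)
    (z : (Fin n → ℝ) × (Fin k → Fin n → ℝ)) (t : Fin k → ℝ) (ht : t ∈ Set.Icc (0 : Fin k → ℝ) 1) :
    |(sacM p (sacX t z, sacY t z)).det| ≤ (1 + k : ℝ) ^ k * |(sacQ p z t).det| := by
  have hs := sac_s_pos t
  have hs1 : 1 + ∑ j, t j ^ 2 ≤ 1 + k := by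
    have : ∑ j, t j ^ 2 ≤ ∑ _j : Fin k, (1 : ℝ) := by
      refine Finset.sum_le_sum fun j _ => ?_
      exact pow_le_one₀ (ht.1 j) (ht.2 j)
    simp only [Finset.sum_const, Finset.card_univ, Fintype.card_fin, nsmul_eq_mul, mul_one] at this
    linarith
  rw [sac_Q_det, abs_mul, abs_pow, abs_neg, abs_of_pos (div_pos two_pos hs), ← mul_assoc, ← mul_pow]
  refine le_mul_of_one_le_left (abs_nonneg _) (one_le_pow₀ ?_)
  rw [mul_div_assoc', le_div_iff₀ hs]
  linarith

theorem strong_anticoncentration_cor (k : ℕ) (hk : 0 < k) (D : ℕ) :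
    ∃ C : ℝ, 0 < C ∧
      ∀ (n : ℕ) (d : Fin k → ℕ), (∀ i, 0 < d i) → (∑ i, d i) = D →
        ∀ p : Fin k → MvPolynomial (Fin n) ℝ, (∀ i, (p i).totalDegree ≤ d i) →
          ∀ (ε : ℝ), 0 < ε → ε < 1 / 2 →
            ((stdGaussian n).prod (Measure.pi fun _ : Fin k => stdGaussian n))
                {ω | (∏ i, |MvPolynomial.eval ω.1 (p i)|) <
                  ε * |Matrix.det (Matrix.of fun i j : Fin k =>
                    ∑ l, MvPolynomial.eval ω.1 (MvPolynomial.pderiv l (p j)) * ω.2 i l)|} ≤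
              ENNReal.ofReal (C * ε * Real.log (1 / ε) ^ k) := by
  obtain ⟨C, hC, H⟩ := sac_core k D ((1 + k : ℝ) ^ k) (by positivity)
  refine ⟨C, hC, ?_⟩
  intro n d _ hd p hp ε hε hε2
  set μ := (_root_.stdGaussian n).prod (Measure.pi fun _ : Fin k => _root_.stdGaussian n) with hμ
  set E : Set ((Fin n → ℝ) × (Fin k → Fin n → ℝ)) :=
    {ω | (∏ i, |MvPolynomial.eval ω.1 (p i)|) < ε * |(sacM p ω).det|} with hE
  change μ E ≤ _
  have hEm : MeasurableSet E := by
    refine (isOpen_lt ?_ ?_).measurableSet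
    · exact continuous_finsetProd _ fun i _ =>
        ((MvPolynomial.continuous_eval _).comp continuous_fst).abs
    · exact continuous_const.mul ((sac_M_cont p).matrix_det).abs
  set T : (Fin k → ℝ) × ((Fin n → ℝ) × (Fin k → Fin n → ℝ)) →
    (Fin n → ℝ) × (Fin k → Fin n → ℝ) := fun w => (sacX w.1 w.2, sacY w.1 w.2) with hT
  have hTc : Continuous T := sac_X_cont.prodMk sac_Y_cont
  have hF : MeasurableSet (T ⁻¹' E) := hTc.measurable hEm
  have hinv : ∀ t, μ (Prod.mk t ⁻¹' (T ⁻¹' E)) = μ E := by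
    intro t
    conv_rhs => rw [hμ, ← sac_invariant t]
    rw [Measure.map_apply _ hEm]
    · rfl
    · exact (hTc.comp (Continuous.prodMk_right t)).measurable
  set ν := (volume : Measure (Fin k → ℝ)).restrict (Set.Icc 0 1) with hν
  have hν1 : ν Set.univ = 1 := by
    rw [hν, Measure.restrict_apply_univ, Real.volume_Icc_pi]
    simp
  have h1 : (ν.prod μ) (T ⁻¹' E) = μ E := by
    rw [Measure.prod_apply hF]
    simp only [hinv]
    rw [lintegral_const, hν1, mul_one]
  rw [← h1, Measure.prod_apply_symm hF]
  have h2 : ∀ z, ν ((fun t => (t, z)) ⁻¹' (T ⁻¹' E)) ≤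
      ENNReal.ofReal (C * ε * Real.log (1 / ε) ^ k) := by
    intro z
    have hm : MeasurableSet ((fun t => (t, z)) ⁻¹' (T ⁻¹' E)) :=
      (Continuous.prodMk_left z).measurable hF
    refine le_trans ?_ (H (fun t j => MvPolynomial.eval (sacX t z) (p j)) (sacQ p z)
      (sac_Q_deriv p z) (sac_Q_meas p z) (fun i => sac_poly (p i) ?_ z) ε hε hε2)
    · rw [hν, Measure.restrict_apply hm]
      refine measure_mono ?_
      rintro t ⟨ht1, ht2⟩
      refine ⟨ht2, lt_of_lt_of_le (show _ < _ from ht1) ?_⟩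
      calc ε * |(sacM p (sacX t z, sacY t z)).det|
          ≤ ε * ((1 + k : ℝ) ^ k * |(sacQ p z t).det|) :=
            mul_le_mul_of_nonneg_left (sac_bound p z t ht2) hε.le
        _ = _ := by ring
    · refine (hp i).trans ?_
      rw [← hd]
      exact Finset.single_le_sum (fun j _ => Nat.zero_le (d j)) (Finset.mem_univ i)
  calc _ ≤ ∫⁻ _z, ENNReal.ofReal (C * ε * Real.log (1 / ε) ^ k) ∂μ := lintegral_mono h2
    _ = _ := by rw [lintegral_const, measure_univ, mul_one]
end

section
/- For every positive integer k there is a constant C_k > 0 with the following property. Let B be an n₁ × n₂ real matrix and ε > 0. Define the antisymmetrized tensor W with entries W_{i₁…i_k, j₁…j_k} := Σ_{σ ∈ S_k} sgn(σ) ∏_{l=1}^k B_{i_{σ(l)} j_l}, indexed by i₁,…,i_k ∈ {1,…,n₁} and j₁,…,j_k ∈ {1,…,n₂}, and suppose that (Σ_{i₁,…,i_k, j₁,…,j_k} W_{i₁…i_k, j₁…j_k}²)^{1/2} < ε^k. Then there exist vectors V¹, …, V^{k−1} ∈ ℝ^{n₁} and W¹, …, W^{k−1} ∈ ℝ^{n₂}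 such that the Frobenius norm satisfies ‖B − Σ_{ℓ=1}^{k−1} V^ℓ (W^ℓ)^T‖_F ≤ C_k·ε. -/
lemma lrl_sum_snoc {n k : ℕ} (f : (Fin (k + 1) → Fin n) → ℝ) :
    ∑ i, f i = ∑ i : Fin k → Fin n, ∑ x : Fin n, f (Fin.snoc i x) := by
  rw [← (Fin.snocEquiv (fun _ : Fin (k + 1) => Fin n)).sum_comp, Fintype.sum_prod_type,
    Finset.sum_comm]
  rfl

lemma lrl_det {n₁ n₂ k : ℕ} (B : Matrix (Fin n₁) (Fin n₂) ℝ) (i : Fin k → Fin n₁)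
    (j : Fin k → Fin n₂) (hD : (B.submatrix i j).det ≠ 0) (x : Fin n₁) (y : Fin n₂) :
    (B.submatrix (Fin.snoc i x : Fin (k + 1) → Fin n₁)
      (Fin.snoc j y : Fin (k + 1) → Fin n₂)).det =
      (B.submatrix i j).det *
        (B x y - ∑ l, (∑ m, B x (j m) * (B.submatrix i j)⁻¹ m l) * B (i l) y) := by
  rw [← Matrix.det_submatrix_equiv_self (finSumFinEquiv : Fin k ⊕ Fin 1 ≃ Fin (k + 1))]
  have h : (B.submatrix (Fin.snoc i x : Fin (k + 1) → Fin n₁)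
      (Fin.snoc j y : Fin (k + 1) → Fin n₂)).submatrix
        (finSumFinEquiv : Fin k ⊕ Fin 1 ≃ Fin (k + 1)) finSumFinEquiv =
      Matrix.fromBlocks (B.submatrix i j) (B.submatrix i (fun _ => y))
        (B.submatrix (fun _ => x) j) (B.submatrix (fun _ => x) (fun _ => y)) := by
    have e1 : ∀ a : Fin k, (Fin.castAdd 1 a : Fin (k + 1)) = Fin.castSucc a := fun _ => rfl
    have e2 : ∀ a : Fin 1, (Fin.natAdd k a : Fin (k + 1)) = Fin.last k := by
      intro a; ext; simp
    ext a b
    rcases a with a | a <;> rcases b with b | b <;>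
      simp only [Matrix.submatrix_apply, finSumFinEquiv_apply_left, finSumFinEquiv_apply_right,
        e1, e2, Fin.snoc_castSucc, Fin.snoc_last, Matrix.fromBlocks_apply₁₁,
        Matrix.fromBlocks_apply₁₂, Matrix.fromBlocks_apply₂₁, Matrix.fromBlocks_apply₂₂]
  rw [h]
  haveI : Invertible (B.submatrix i j) :=
    Matrix.invertibleOfIsUnitDet _ (isUnit_iff_ne_zero.mpr hD)
  rw [Matrix.det_fromBlocks₁₁, Matrix.invOf_eq_nonsing_inv]
  congr 1
  simp [Matrix.mul_apply]

lemma lrl_main {n₁ n₂ : ℕ} (B : Matrix (Fin n₁) (Fin n₂) ℝ) (e : ℝ) (k : ℕ)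
    (h : ∑ i : Fin (k + 1) → Fin n₁, ∑ j : Fin (k + 1) → Fin n₂, (B.submatrix i j).det ^ 2
      < e ^ (k + 1)) (he : 0 < e) :
    ∃ (V : Fin k → Fin n₁ → ℝ) (W : Fin k → Fin n₂ → ℝ),
      ∑ i, ∑ j, (B i j - ∑ l, V l i * W l j) ^ 2 ≤ e := by
  induction k with
  | zero => exact ⟨0, 0, by
      simp only [lrl_sum_snoc, Matrix.det_unique] at h
      simpa [Fin.snoc] using h.le⟩
  | succ k ih =>
    by_cases hk : ∑ i : Fin (k + 1) → Fin n₁, ∑ j : Fin (k + 1) → Fin n₂,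
        (B.submatrix i j).det ^ 2 < e ^ (k + 1)
    · obtain ⟨V, W, hVW⟩ := ih hk
      exact ⟨Fin.cons 0 V, Fin.cons 0 W, by simpa [Fin.sum_univ_succ] using hVW⟩
    · push Not at hk
      have h2 : ∑ p : (Fin (k + 1) → Fin n₁) × (Fin (k + 1) → Fin n₂), ∑ x, ∑ y,
          (B.submatrix (Fin.snoc p.1 x : Fin (k + 2) → Fin n₁)
            (Fin.snoc p.2 y : Fin (k + 2) → Fin n₂)).det ^ 2 <
          ∑ p : (Fin (k + 1) → Fin n₁) × (Fin (k + 1) → Fin n₂),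
            e * (B.submatrix p.1 p.2).det ^ 2 := by
        rw [← Finset.mul_sum, Fintype.sum_prod_type, Fintype.sum_prod_type]
        simp only [lrl_sum_snoc (k := k + 1)] at h
        calc _ = _ := by
              refine Finset.sum_congr rfl fun i _ => ?_
              rw [Finset.sum_comm]
          _ < _ := h
          _ = e * e ^ (k + 1) := by ring
          _ ≤ _ := mul_le_mul_of_nonneg_left hk he.le
      obtain ⟨⟨i, j⟩, -, hij⟩ := Finset.exists_lt_of_sum_lt h2
      simp only at hij
      have hD : (B.submatrix i j).det ≠ 0 := by
        intro h0
        rw [h0] at hij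
        have : 0 ≤ ∑ x, ∑ y, (B.submatrix (Fin.snoc i x : Fin (k + 2) → Fin n₁)
            (Fin.snoc j y : Fin (k + 2) → Fin n₂)).det ^ 2 := by positivity
        simp at hij
        linarith
      refine ⟨fun l x => ∑ m, B x (j m) * (B.submatrix i j)⁻¹ m l, fun l y => B (i l) y, ?_⟩
      simp only [lrl_det B i j hD, mul_pow, ← Finset.mul_sum] at hij
      have hp : 0 < (B.submatrix i j).det ^ 2 := by positivity
      rw [mul_comm e] at hij
      exact (lt_of_mul_lt_mul_left hij hp.le).le

/-- **Low-rank approximation lemma.**  For every positive integer `k` there is a constant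
`C_k > 0` such that: if `B` is an `n₁ × n₂` real matrix and `ε > 0` satisfy that the
antisymmetrized tensor `W_{i₁…i_k, j₁…j_k} = ∑_{σ ∈ S_k} sgn(σ) ∏ₗ B_{i_{σ(l)} j_l}` has
`L²` norm `< ε^k`, then `B` is within `C_k · ε` in Frobenius norm of a sum of `k - 1`
rank-one matrices. -/
theorem low_rank_lemma (k : ℕ) (hk : 0 < k) :
    ∃ C : ℝ, 0 < C ∧
      ∀ (n₁ n₂ : ℕ) (B : Matrix (Fin n₁) (Fin n₂) ℝ) (ε : ℝ), 0 < ε →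
        Real.sqrt (∑ i : Fin k → Fin n₁, ∑ j : Fin k → Fin n₂,
            (∑ σ : Equiv.Perm (Fin k),
              ((Equiv.Perm.sign σ : ℤ) : ℝ) * ∏ l, B (i (σ l)) (j l)) ^ 2) < ε ^ k →
        ∃ (V : Fin (k - 1) → Fin n₁ → ℝ) (W : Fin (k - 1) → Fin n₂ → ℝ),
          Real.sqrt (∑ i, ∑ j, (B i j - ∑ ℓ, V ℓ i * W ℓ j) ^ 2) ≤ C * ε := by
  refine ⟨1, one_pos, ?_⟩
  intro n₁ n₂ B ε hε h
  obtain ⟨k, rfl⟩ : ∃ m, k = m + 1 := ⟨k - 1, by omega⟩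
  rw [Real.sqrt_lt' (by positivity), ← pow_mul, mul_comm, pow_mul] at h
  obtain ⟨V, W, hVW⟩ := lrl_main B (ε ^ 2) k (by
    simpa [Matrix.det_apply', Matrix.submatrix_apply] using h) (by positivity)
  refine ⟨V, W, ?_⟩
  rw [one_mul]
  exact Real.sqrt_le_iff.mpr ⟨hε.le, hVW⟩
end

section
/- There exist constants c₀ > 0 and C > 0 depending only on m and d with the following property. Let (h, q₁, …, q_m) be an (ε, N)-diffuse decomposition of size m of a degree-d polynomial p : ℝⁿ → ℝ, with 0 < ε < 1/2 and N·ε·log(1/ε) < c₀. Then |h|₂ ≤ C·N^d·|p|₂, where |h|₂ denotes the L² norm of h with respect to the standard Gaussian measure on ℝᵐ and |p|₂ the L² norm of p with respect to the standard Gaussian measure on ℝⁿ. -/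
open MeasureTheory ProbabilityTheory

/-- The Gaussian `L²` norm of a polynomial on `ℝⁿ`. -/
noncomputable def gaussL2 {n : ℕ} (p : MvPolynomial (Fin n) ℝ) : ℝ :=
  Real.sqrt (∫ x, (MvPolynomial.eval x p) ^ 2 ∂(stdGaussian n))

/-- `(h, q)` is a decomposition of the degree-`d` polynomial `p`. -/
def IsDecomposition {n m : ℕ} (d : ℕ) (p : MvPolynomial (Fin n) ℝ)
    (h : MvPolynomial (Fin m) ℝ) (q : Fin m → MvPolynomial (Fin n) ℝ) : Prop :=
  MvPolynomial.aeval q h = p ∧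
    ∀ a ∈ h.support, (∑ i, a i * (q i).totalDegree) ≤ d

/-- `(q₁, …, q_m)` is an `(ε, N)`-diffuse set. -/
def IsDiffuseSet {n : ℕ} (m : ℕ) (ε N : ℝ) (q : Fin m → MvPolynomial (Fin n) ℝ) : Prop :=
  (∀ i, ∫ x, (MvPolynomial.eval x (q i)) ^ 2 ∂(stdGaussian n) ≤ 1) ∧
    ∀ a : Fin m → ℝ,
      stdGaussian n {x | ∀ i, |MvPolynomial.eval x (q i) - a i| ≤ ε} ≤
        ENNReal.ofReal (ε ^ m * N)

namespace HSmall

open MvPolynomial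

lemma totalDegree_pderiv_le' {m : ℕ} (i : Fin m) (g : MvPolynomial (Fin m) ℝ) (D : ℕ)
    (hg : g.totalDegree ≤ D + 1) : (pderiv i g).totalDegree ≤ D := by
  classical
  rw [g.as_sum, map_sum]
  refine totalDegree_finsetSum_le (fun s hs => ?_)
  rw [pderiv_monomial]
  by_cases h0 : s i = 0
  · simp [h0]
  · refine (totalDegree_monomial_le _ _).trans ?_
    have h1 : (s.sum fun _ e => e) ≤ D + 1 := (le_totalDegree hs).trans hg
    have h2 : s = (s - Finsupp.single i 1) + Finsupp.single i 1 := by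
      rw [tsub_add_cancel_of_le]
      rw [Finsupp.single_le_iff]; omega
    have h3 : (s.sum fun _ e => e) = ((s - Finsupp.single i 1).sum fun _ e => e) + 1 := by
      conv_lhs => rw [h2]
      rw [Finsupp.sum_add_index' (by simp) (by simp)]
      simp
    show ((s - Finsupp.single i 1).sum fun _ e => e) ≤ D
    omega

lemma totalDegree_pderiv_le {m : ℕ} (i : Fin m) (g : MvPolynomial (Fin m) ℝ) (D : ℕ)
    (hg : g.totalDegree ≤ D) : (pderiv i g).totalDegree ≤ D :=
  totalDegree_pderiv_le' i g D (by omega)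

/-- restriction of a polynomial to a line -/
noncomputable def lineP {m : ℕ} (w v : Fin m → ℝ) (g : MvPolynomial (Fin m) ℝ) : Polynomial ℝ :=
  aeval (fun j => Polynomial.C (w j) + Polynomial.C (v j) * Polynomial.X) g

lemma lineP_eval {m : ℕ} (w v : Fin m → ℝ) (g : MvPolynomial (Fin m) ℝ) (t : ℝ) :
    (lineP w v g).eval t = eval (fun j => w j + v j * t) g := by
  unfold lineP
  induction g using MvPolynomial.induction_on with
  | C a => simp
  | add p q hp hq => simp [hp, hq]
  | mul_X p i hp => simp [hp]

lemma lineP_deriv {m : ℕ} (w v : Fin m → ℝ) (g : MvPolynomial (Fin m) ℝ) :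
    (lineP w v g).derivative = ∑ j, Polynomial.C (v j) * lineP w v (pderiv j g) := by
  classical
  unfold lineP
  induction g using MvPolynomial.induction_on with
  | C a => simp
  | add p q hp hq => simp [hp, hq, mul_add, Finset.sum_add_distrib]
  | mul_X p i hp =>
    have hd : Polynomial.derivative (Polynomial.C (w i) + Polynomial.C (v i) * Polynomial.X) =
      Polynomial.C (v i) := by simp
    rw [map_mul, aeval_X, Polynomial.derivative_mul, hp, hd, Finset.sum_mul]
    simp only [Derivation.leibniz, pderiv_X, smul_eq_mul, map_add, map_mul, aeval_X, mul_add,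
      Finset.sum_add_distrib]
    rw [add_comm]
    congr 1
    · rw [Finset.sum_eq_single i]
      · simp only [Pi.single_eq_same, map_one]
        ring
      · intro b _ hb
        simp [hb.symm]
      · simp
    · rw [← Finset.sum_add_distrib]
      refine Finset.sum_congr rfl fun j _ => ?_
      ring

lemma lineP_natDegree {m : ℕ} (w v : Fin m → ℝ) (g : MvPolynomial (Fin m) ℝ) (d : ℕ)
    (hg : g.totalDegree ≤ d) : (lineP w v g).natDegree ≤ d := by
  have := aeval_natDegree_le (m := d) (n := 1) g hg
    (fun j => Polynomial.C (w j) + Polynomial.C (v j) * Polynomial.X) (fun j => by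
      compute_degree)
  simpa [lineP] using this

lemma oneD (f : Polynomial ℝ) (d : ℕ) (hf : f.natDegree ≤ d) (K : ℝ) (hK : 0 < K) :
    volume {t : ℝ | K * |f.eval t| < |f.derivative.eval t|} ≤
      ENNReal.ofReal (2 * d * d / K) := by
  by_cases hf0 : f = 0
  · simp [hf0]
  set F : Polynomial ℂ := f.map (algebraMap ℝ ℂ) with hF
  have hFd : F.natDegree ≤ d := by rw [hF, Polynomial.natDegree_map]; exact hf
  have hF0 : F ≠ 0 := by rw [hF]; exact (Polynomial.map_ne_zero_iff (algebraMap ℝ ℂ).injective).2 hf0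
  have hev : ∀ t : ℝ, F.eval (t : ℂ) = ((f.eval t : ℝ) : ℂ) := by
    intro t
    rw [hF, Polynomial.eval_map]
    exact Polynomial.eval₂_at_apply (algebraMap ℝ ℂ) t
  have hev' : ∀ t : ℝ, F.derivative.eval (t : ℂ) = ((f.derivative.eval t : ℝ) : ℂ) := by
    intro t
    rw [hF, Polynomial.derivative_map, Polynomial.eval_map]
    exact Polynomial.eval₂_at_apply (algebraMap ℝ ℂ) t
  have hsub : {t : ℝ | K * |f.eval t| < |f.derivative.eval t|} ⊆
      ⋃ r ∈ F.roots.toFinset, Metric.closedBall r.re (d / K) := by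
    intro t ht
    simp only [Set.mem_ofPred_eq] at ht
    by_contra hcon
    simp only [Set.mem_iUnion, not_exists, Multiset.mem_toFinset, Metric.mem_closedBall,
      Real.dist_eq, not_le] at hcon
    have hpos : 0 ≤ (d : ℝ) / K := by positivity
    have hne : F.eval (t : ℂ) ≠ 0 := by
      intro h0
      have := hcon t ((Polynomial.mem_roots hF0).2 h0)
      simp at this
      linarith
    have hne' : f.eval t ≠ 0 := by
      intro h0; apply hne; rw [hev, h0]; simp
    have hd0 : 0 < d := by
      rcases Nat.eq_zero_or_pos d with h | h
      · exfalso
        have h1 : f.natDegree = 0 := by omega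
        have h2 : f.derivative = 0 := Polynomial.derivative_of_natDegree_zero h1
        rw [h2] at ht
        simp at ht
        have := abs_nonneg (f.eval t)
        nlinarith
      · exact h
    have hd : (0:ℝ) < d := by exact_mod_cast hd0
    have key := (IsAlgClosed.splits F).eval_derivative_div_eval_of_ne_zero hne
    have hb : ‖(F.roots.map fun z ↦ 1 / ((t:ℂ) - z)).sum‖ ≤ K := by
      refine (norm_multiset_sum_le _).trans ?_
      rw [Multiset.map_map]
      refine (Multiset.sum_le_card_nsmul _ (K / d) ?_).trans ?_
      · intro x hx
        obtain ⟨z, hz, rfl⟩ := Multiset.mem_map.1 hx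
        have h1 := hcon z hz
        have h2 : |t - z.re| ≤ ‖(t:ℂ) - z‖ := by
          simpa using Complex.abs_re_le_norm ((t:ℂ) - z)
        have h3 : (d:ℝ)/K ≤ ‖(t:ℂ) - z‖ := by linarith
        simp only [Function.comp, norm_div, norm_one]
        rw [one_div]
        calc _ ≤ ((d:ℝ)/K)⁻¹ := by gcongr
          _ = _ := by rw [inv_div]
      · rw [Multiset.card_map, nsmul_eq_mul]
        have : (F.roots.card : ℝ) ≤ d := by
          exact_mod_cast (Polynomial.card_roots' F).trans hFd
        calc _ ≤ (d:ℝ) * (K/d) := by gcongr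
          _ = K := by field_simp
    rw [← key, hev, hev', norm_div, Complex.norm_real, Complex.norm_real,
      Real.norm_eq_abs, Real.norm_eq_abs, div_le_iff₀ (abs_pos.2 hne')] at hb
    linarith
  refine (measure_mono hsub).trans ((measure_biUnion_finset_le _ _).trans ?_)
  simp only [Real.volume_closedBall, Finset.sum_const, nsmul_eq_mul]
  rw [← ENNReal.ofReal_natCast, ← ENNReal.ofReal_mul (by positivity)]
  apply ENNReal.ofReal_le_ofReal
  have : (F.roots.toFinset.card : ℝ) ≤ d := by
    exact_mod_cast (Multiset.toFinset_card_le _).trans ((Polynomial.card_roots' F).trans hFd)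
  calc _ ≤ (d:ℝ) * (2 * (d/K)) := by gcongr
    _ = _ := by ring

/-- `w` is a good point. -/
def Good {m : ℕ} (K : ℝ) : ℕ → MvPolynomial (Fin m) ℝ → (Fin m → ℝ) → Prop
  | 0, _, _ => True
  | D + 1, g, w => ∀ i, |eval w (pderiv i g)| ≤ K * |eval w g| ∧ Good K D (pderiv i g) w

lemma good_bound {m : ℕ} (K : ℝ) (hK : 0 ≤ K) (w : Fin m → ℝ) (s : ℝ) (D : ℕ) :
    ∀ (g : MvPolynomial (Fin m) ℝ), g.totalDegree ≤ D → Good K D g w →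
    ∀ x : Fin m → ℝ, K * ∑ i, |x i - w i| ≤ s →
      |eval x g - eval w g| ≤ ((1 + s) ^ D - 1) * |eval w g| := by
  induction D with
  | zero =>
    intro g hg _ x _
    obtain hC := totalDegree_eq_zero_iff_eq_C.1 (Nat.le_zero.1 hg)
    rw [hC]; simp
  | succ D ih =>
    intro g hg hgood x hx
    have hs : 0 ≤ s := le_trans (mul_nonneg hK (Finset.sum_nonneg fun i _ => abs_nonneg _)) hx
    set v : Fin m → ℝ := fun i => x i - w i with hv
    obtain ⟨t, ht, hmv⟩ := exists_hasDerivAt_eq_slope (fun t => (lineP w v g).eval t)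
      (fun t => (lineP w v g).derivative.eval t) zero_lt_one
      (Polynomial.continuous _).continuousOn (fun t _ => Polynomial.hasDerivAt _ t)
    have e1 : (lineP w v g).eval 1 = eval x g := by
      rw [lineP_eval]; congr 2; ext j; simp [hv]
    have e0 : (lineP w v g).eval 0 = eval w g := by
      rw [lineP_eval]; congr 2; ext j; simp
    simp only [e1, e0, sub_zero, div_one] at hmv
    rw [← hmv, lineP_deriv, Polynomial.eval_finsetSum]
    set y : Fin m → ℝ := fun j => w j + v j * t with hy
    have hyx : K * ∑ i, |y i - w i| ≤ s := by
      refine le_trans ?_ hx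
      refine mul_le_mul_of_nonneg_left (Finset.sum_le_sum fun i _ => ?_) hK
      simp only [hy, hv, add_sub_cancel_left, abs_mul, abs_of_pos ht.1]
      exact mul_le_of_le_one_right (abs_nonneg _) ht.2.le
    calc |∑ j, (Polynomial.C (v j) * lineP w v (pderiv j g)).eval t|
        ≤ ∑ j, |(Polynomial.C (v j) * lineP w v (pderiv j g)).eval t| :=
          Finset.abs_sum_le_sum_abs _ _
      _ ≤ ∑ j, |v j| * ((1 + s) ^ D * (K * |eval w g|)) := by
          refine Finset.sum_le_sum fun j _ => ?_
          rw [Polynomial.eval_mul, Polynomial.eval_C, lineP_eval, abs_mul]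
          gcongr
          have h1 := ih (pderiv j g) (totalDegree_pderiv_le' j g D hg) (hgood j).2 y hyx
          have h2 := (hgood j).1
          have h3 : |eval y (pderiv j g)| ≤ (1 + s) ^ D * |eval w (pderiv j g)| := by
            have := abs_sub_abs_le_abs_sub (eval y (pderiv j g)) (eval w (pderiv j g))
            linarith
          exact h3.trans (by gcongr)
      _ = (K * ∑ j, |v j|) * ((1 + s) ^ D * |eval w g|) := by
          rw [← Finset.sum_mul]; ring
      _ ≤ s * ((1 + s) ^ D * |eval w g|) := by gcongr
      _ ≤ _ := by
          have : 1 ≤ (1 + s) ^ D := one_le_pow₀ (by linarith)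
          rw [pow_succ]
          nlinarith [abs_nonneg (eval w g)]

end HSmall

namespace HSmall

open MvPolynomial

lemma slice_bound {m : ℕ} (i : Fin m) (E : Set (Fin m → ℝ)) (hE : MeasurableSet E)
    (R : ℝ) (hR : 0 ≤ R) (hER : E ⊆ Metric.closedBall 0 R) (c : ℝ) (hc : 0 ≤ c)
    (h : ∀ y : Fin m → ℝ, volume {t : ℝ | Function.update y i t ∈ E} ≤ ENNReal.ofReal c) :
    volume E ≤ ENNReal.ofReal (c * (2 * R) ^ (m - 1)) := by
  cases m with
  | zero => exact i.elim0
  | succ k =>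
    set e := MeasurableEquiv.piFinSuccAbove (fun _ : Fin (k + 1) => ℝ) i with he
    have hmp := (volume_preserving_piFinSuccAbove (fun _ : Fin (k + 1) => ℝ) i).symm
    rw [← hmp.measure_preimage hE.nullMeasurableSet]
    have hms : MeasurableSet (e.symm ⁻¹' E) := e.symm.measurable hE
    have happ : ∀ (t : ℝ) (y : Fin k → ℝ), e.symm (t, y) = i.insertNth t y := fun t y => rfl
    rw [Measure.volume_eq_prod, Measure.prod_apply_symm hms]
    calc ∫⁻ y : Fin k → ℝ, volume ((fun t : ℝ => (t, y)) ⁻¹' (e.symm ⁻¹' E))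
        ≤ ∫⁻ y : Fin k → ℝ, (Metric.closedBall (0 : Fin k → ℝ) R).indicator
            (fun _ => ENNReal.ofReal c) y := by
          refine lintegral_mono fun y => ?_
          by_cases hy : y ∈ Metric.closedBall (0 : Fin k → ℝ) R
          · rw [Set.indicator_of_mem hy]
            refine le_trans (measure_mono ?_) (h (i.insertNth 0 y))
            intro t ht
            have ht' : e.symm (t, y) ∈ E := ht
            rw [happ] at ht'
            simpa using ht'
          · rw [Set.indicator_of_notMem hy]
            refine le_of_eq ?_
            convert measure_empty (μ := (volume : Measure ℝ))
            ext t
            simp only [Set.mem_empty_iff_false, iff_false]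
            intro ht
            have ht' : e.symm (t, y) ∈ E := ht
            rw [happ] at ht'
            apply hy
            have h2 := hER ht'
            rw [mem_closedBall_zero_iff, pi_norm_le_iff_of_nonneg hR] at h2 ⊢
            intro j
            simpa using h2 (i.succAbove j)
      _ = ENNReal.ofReal c * volume (Metric.closedBall (0 : Fin k → ℝ) R) :=
          lintegral_indicator_const measurableSet_closedBall _
      _ = _ := by
          rw [Real.volume_pi_closedBall _ hR, ← ENNReal.ofReal_mul hc]
          simp

lemma continuous_eval' {m : ℕ} (g : MvPolynomial (Fin m) ℝ) :
    Continuous fun w : Fin m → ℝ => eval w g := MvPolynomial.continuous_eval g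

lemma bad_one {m : ℕ} (d : ℕ) (R : ℝ) (hR : 0 ≤ R) (K : ℝ) (hK : 0 < K)
    (g : MvPolynomial (Fin m) ℝ) (hg : g.totalDegree ≤ d) (i : Fin m) :
    volume (Metric.closedBall (0 : Fin m → ℝ) R ∩
      {w | K * |eval w g| < |eval w (pderiv i g)|}) ≤
      ENNReal.ofReal (2 * d * d / K * (2 * R) ^ (m - 1)) := by
  refine slice_bound i _ ?_ R hR Set.inter_subset_left _ (by positivity) ?_
  · refine measurableSet_closedBall.inter (measurableSet_lt ?_ ?_)
    · exact (continuous_const.mul (continuous_eval' g).abs).measurable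
    · exact (continuous_eval' _).abs.measurable
  · intro y
    refine le_trans (measure_mono ?_)
      (oneD (lineP (Function.update y i 0) (Pi.single i 1) g) d (lineP_natDegree _ _ g d hg) K hK)
    intro t ht
    have hup : (fun j => Function.update y i 0 j + (Pi.single i 1 : Fin m → ℝ) j * t) =
        Function.update y i t := by
      ext j
      by_cases hj : j = i
      · subst hj; simp
      · simp [hj]
    have ht2 : K * |eval (Function.update y i t) g| <
      |eval (Function.update y i t) (pderiv i g)| := ht.2
    show K * |_| < |_|
    rw [lineP_deriv, Polynomial.eval_finsetSum, Finset.sum_eq_single i]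
    · simpa [lineP_eval, hup] using ht2
    · intro b _ hb
      simp [hb]
    · simp

lemma bad_vol (m d : ℕ) (R : ℝ) (hR : 0 ≤ R) (D : ℕ) : ∃ β : ℝ, 0 ≤ β ∧
    ∀ K : ℝ, 0 < K → ∀ g : MvPolynomial (Fin m) ℝ, g.totalDegree ≤ d →
      volume (Metric.closedBall (0 : Fin m → ℝ) R ∩ {w | ¬ Good K D g w}) ≤
        ENNReal.ofReal (β / K) := by
  induction D with
  | zero => exact ⟨0, le_rfl, fun K _ g _ => by simp [Good]⟩
  | succ D ih =>
    obtain ⟨β, hβ, ih⟩ := ih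
    refine ⟨m * (2 * d * d * (2 * R) ^ (m - 1) + β), by positivity, fun K hK g hg => ?_⟩
    have hsub : Metric.closedBall (0 : Fin m → ℝ) R ∩ {w | ¬ Good K (D + 1) g w} ⊆
        ⋃ i, ((Metric.closedBall (0 : Fin m → ℝ) R ∩
          {w | K * |eval w g| < |eval w (pderiv i g)|}) ∪
          (Metric.closedBall (0 : Fin m → ℝ) R ∩ {w | ¬ Good K D (pderiv i g) w})) := by
      rintro w ⟨hw, hbad⟩
      have hbad' : ¬ Good K (D + 1) g w := hbad
      rw [Good, not_forall] at hbad'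
      obtain ⟨i, hi⟩ := hbad'
      refine Set.mem_iUnion.2 ⟨i, ?_⟩
      rw [not_and_or, not_le] at hi
      rcases hi with hi | hi
      · exact Or.inl ⟨hw, hi⟩
      · exact Or.inr ⟨hw, hi⟩
    refine (measure_mono hsub).trans ((measure_iUnion_fintype_le _ _).trans ?_)
    calc _ ≤ ∑ i : Fin m, ENNReal.ofReal (2 * d * d / K * (2 * R) ^ (m - 1) + β / K) := by
          refine Finset.sum_le_sum fun i _ => (measure_union_le _ _).trans ?_
          rw [ENNReal.ofReal_add (by positivity) (by positivity)]
          exact add_le_add (bad_one d R hR K hK g hg i)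
            (ih K hK _ (totalDegree_pderiv_le i g d hg))
      _ = _ := by
          rw [Finset.sum_const, Finset.card_univ, Fintype.card_fin, nsmul_eq_mul,
            ← ENNReal.ofReal_natCast, ← ENNReal.ofReal_mul (by positivity)]
          congr 1
          ring

lemma conv_bound {Ω : Type*} [MeasurableSpace Ω] (P : Measure Ω) [IsProbabilityMeasure P]
    {m : ℕ} (Q : Ω → Fin m → ℝ) (hQ : Measurable Q) (ε N : ℝ) (hε : 0 < ε)
    (hdiff : ∀ a : Fin m → ℝ, P {x | ∀ i, |Q x i - a i| ≤ ε} ≤ ENNReal.ofReal (ε ^ m * N))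
    (A : Set Ω) (V : Set (Fin m → ℝ)) (hA : ∀ x ∈ A, Metric.closedBall (Q x) ε ⊆ V)
    (b : ℝ) (hb : 0 ≤ b) (hV : volume V ≤ ENNReal.ofReal b) :
    P A ≤ ENNReal.ofReal (b * N) := by
  set V' := toMeasurable volume V with hV'
  have hV'm : MeasurableSet V' := measurableSet_toMeasurable _ _
  set S : Set (Ω × (Fin m → ℝ)) := {z | z.2 ∈ V' ∧ dist z.2 (Q z.1) ≤ ε} with hS
  have hSm : MeasurableSet S := by
    have h0 : MeasurableSet {z : Ω × (Fin m → ℝ) | dist z.2 (Q z.1) ≤ ε} :=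
      measurableSet_le (measurable_snd.dist (hQ.comp measurable_fst)) measurable_const
    exact (measurable_snd hV'm).inter h0
  have h1 : (P.prod volume) S ≤ ENNReal.ofReal (ε ^ m * N) * ENNReal.ofReal b := by
    rw [Measure.prod_apply_symm hSm]
    calc _ ≤ ∫⁻ w : Fin m → ℝ, V'.indicator (fun _ => ENNReal.ofReal (ε ^ m * N)) w := by
          refine lintegral_mono fun w => ?_
          by_cases hw : w ∈ V'
          · rw [Set.indicator_of_mem hw]
            refine le_trans (measure_mono ?_) (hdiff w)
            intro x hx i
            have hx2 : dist w (Q x) ≤ ε := hx.2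
            have := (dist_pi_le_iff hε.le).1 hx2 i
            rwa [Real.dist_eq, abs_sub_comm] at this
          · rw [Set.indicator_of_notMem hw]
            refine le_of_eq ?_
            convert measure_empty (μ := P)
            ext x
            simp only [Set.mem_empty_iff_false, iff_false]
            intro hx
            exact hw hx.1
      _ = ENNReal.ofReal (ε ^ m * N) * volume V' := lintegral_indicator_const hV'm _
      _ ≤ _ := by
          rw [hV', measure_toMeasurable]
          gcongr
  rw [Measure.prod_apply hSm] at h1
  have h2 := mul_meas_ge_le_lintegral (μ := P)
    (measurable_measure_prodMk_left (ν := (volume : Measure (Fin m → ℝ))) hSm)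
    (ENNReal.ofReal (ε ^ m))
  have h3 : A ⊆ {x | ENNReal.ofReal (ε ^ m) ≤ volume (Prod.mk x ⁻¹' S)} := by
    intro x hx
    show ENNReal.ofReal (ε ^ m) ≤ volume (Prod.mk x ⁻¹' S)
    calc ENNReal.ofReal (ε ^ m) ≤ ENNReal.ofReal ((2 * ε) ^ m) := by
          apply ENNReal.ofReal_le_ofReal
          gcongr
          linarith
      _ = volume (Metric.closedBall (Q x) ε) := by
          rw [Real.volume_pi_closedBall _ hε.le, Fintype.card_fin]
      _ ≤ _ := by
          refine measure_mono fun w hw => ⟨subset_toMeasurable _ _ (hA x hx hw), hw⟩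
  have h4 : ENNReal.ofReal (ε ^ m) * P A ≤ ENNReal.ofReal (ε ^ m) * ENNReal.ofReal (b * N) := by
    calc _ ≤ _ := mul_le_mul_right (measure_mono h3) _
      _ ≤ _ := h2.trans h1
      _ = _ := by
        rw [ENNReal.ofReal_mul (by positivity : 0 ≤ ε ^ m), ENNReal.ofReal_mul hb]
        ring
  exact (ENNReal.mul_le_mul_iff_right (by simpa using pow_pos hε m) ENNReal.ofReal_ne_top).1 h4

instance (n : ℕ) : IsProbabilityMeasure (stdGaussian n) := by
  unfold _root_.stdGaussian; infer_instance

lemma integrable_eval {n : ℕ} (g : MvPolynomial (Fin n) ℝ) :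
    Integrable (fun x => eval x g) (stdGaussian n) := by
  have : (fun x : Fin n → ℝ => eval x g) =
      fun x => ∑ s ∈ g.support, g.coeff s * ∏ i, x i ^ s i := by
    ext x; exact eval_eq' x g
  rw [this]
  refine integrable_finsetSum _ fun s _ => Integrable.const_mul ?_ _
  refine Integrable.fintype_prod (f := fun i (t : ℝ) => t ^ s i) fun i => ?_
  have h := (memLp_id_gaussianReal (μ := 0) (v := 1) (s i : NNReal)).integrable_norm_pow'
  refine (integrable_norm_iff ?_).1 ?_
  · exact (measurable_id.pow_const _).aestronglyMeasurable
  · simpa using h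

lemma integrable_eval_sq {n : ℕ} (g : MvPolynomial (Fin n) ℝ) :
    Integrable (fun x => (eval x g) ^ 2) (stdGaussian n) := by
  have h : (fun x : Fin n → ℝ => (eval x g) ^ 2) = fun x => eval x (g ^ 2) := by
    ext x; exact (map_pow (eval x) g 2).symm
  rw [h]
  exact integrable_eval (g ^ 2)

lemma eval_aeval {n m : ℕ} (q : Fin m → MvPolynomial (Fin n) ℝ) (h : MvPolynomial (Fin m) ℝ)
    (x : Fin n → ℝ) : eval x (aeval q h) = eval (fun i => eval x (q i)) h := by
  induction h using MvPolynomial.induction_on with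
  | C a => simp
  | add p q hp hq => rw [map_add, map_add, map_add, hp, hq]
  | mul_X p i hp => rw [map_mul, map_mul, map_mul, hp, aeval_X, eval_X]

end HSmall

namespace HSmall

open MvPolynomial

/-- auxiliary dominating polynomial -/
noncomputable def Bp (m : ℕ) (R : ℝ) : MvPolynomial (Fin m) ℝ :=
  C (1 + m * (R + 1)) + ∑ i, X i ^ 2

lemma good_final {m : ℕ} (d : ℕ) (R K : ℝ) (hR : 0 ≤ R) (hK : 1 ≤ K)
    (h : MvPolynomial (Fin m) ℝ) (hd : h.totalDegree ≤ d) (w : Fin m → ℝ)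
    (hw : w ∈ Metric.closedBall 0 R) (hgood : Good K d h w) :
    gaussL2 h ≤ K ^ d * |eval w h| * gaussL2 (Bp m R ^ d) := by
  have hpt : ∀ x : Fin m → ℝ, (eval x h) ^ 2 ≤
      (K ^ d * |eval w h|) ^ 2 * (eval x (Bp m R ^ d)) ^ 2 := by
    intro x
    have hs0 : 0 ≤ ∑ i, |x i - w i| := Finset.sum_nonneg fun i _ => abs_nonneg _
    have h1 := good_bound K (by linarith) w _ d h hd hgood x le_rfl
    set s := ∑ i, |x i - w i| with hs
    have h2 : |eval x h| ≤ (1 + K * s) ^ d * |eval w h| := by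
      have := abs_sub_abs_le_abs_sub (eval x h) (eval w h)
      linarith
    have hsB : 1 + s ≤ eval x (Bp m R) := by
      have : s ≤ ∑ i, ((R + 1) + x i ^ 2) := by
        refine Finset.sum_le_sum fun i _ => ?_
        have hwi : |w i| ≤ R := by
          rw [mem_closedBall_zero_iff, pi_norm_le_iff_of_nonneg hR] at hw
          exact hw i
        have hxi : |x i| ≤ 1 + x i ^ 2 := by
          rw [← sq_abs]; nlinarith [sq_nonneg (|x i| - 1)]
        have := abs_sub (x i) (w i)
        linarith
      rw [Finset.sum_add_distrib] at this
      simp [Bp] at this ⊢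
      linarith
    have h3 : |eval x h| ≤ (K ^ d * |eval w h|) * |eval x (Bp m R ^ d)| := by
      rw [map_pow, abs_pow, abs_of_nonneg (by linarith : 0 ≤ eval x (Bp m R))]
      calc _ ≤ (1 + K * s) ^ d * |eval w h| := h2
        _ ≤ (K * eval x (Bp m R)) ^ d * |eval w h| := by
            gcongr
            nlinarith
        _ = _ := by rw [mul_pow]; ring
    calc (eval x h) ^ 2 = |eval x h| ^ 2 := (sq_abs _).symm
      _ ≤ ((K ^ d * |eval w h|) * |eval x (Bp m R ^ d)|) ^ 2 := by gcongr
      _ = _ := by rw [mul_pow, sq_abs (eval x (Bp m R ^ d))]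
  unfold gaussL2
  have hnn : 0 ≤ K ^ d * |eval w h| := by positivity
  rw [← Real.sqrt_sq hnn, ← Real.sqrt_mul (sq_nonneg _), ← integral_const_mul]
  exact Real.sqrt_le_sqrt (integral_mono (integrable_eval_sq h)
    ((integrable_eval_sq _).const_mul _) hpt)

lemma pow_bound (s : ℝ) (hs : 0 ≤ s) (d : ℕ) (h : 2 * s * d ≤ 1) :
    (1 + s) ^ d ≤ 1 + 2 * s * d := by
  induction d with
  | zero => simp
  | succ d ih =>
    push_cast at h ⊢
    have := ih (by linarith)
    rw [pow_succ]
    nlinarith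

lemma ball_prob {n m : ℕ} (q : Fin m → MvPolynomial (Fin n) ℝ)
    (hq : ∀ i, ∫ x, (eval x (q i)) ^ 2 ∂(_root_.stdGaussian n) ≤ 1) :
    (_root_.stdGaussian n).real {x | ¬ ∀ i, |eval x (q i)| ≤ (m : ℝ) + 2} ≤ 1 / 4 := by
  have hsub : {x : Fin n → ℝ | ¬ ∀ i, |eval x (q i)| ≤ (m : ℝ) + 2} ⊆
      ⋃ i, {x | ((m : ℝ) + 2) ^ 2 ≤ (eval x (q i)) ^ 2} := by
    intro x hx
    have hx' : ¬ ∀ i, |eval x (q i)| ≤ (m : ℝ) + 2 := hx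
    rw [not_forall] at hx'
    obtain ⟨i, hi⟩ := hx'
    refine Set.mem_iUnion.2 ⟨i, ?_⟩
    show ((m : ℝ) + 2) ^ 2 ≤ (eval x (q i)) ^ 2
    rw [← sq_abs (eval x (q i))]
    have : (m : ℝ) + 2 ≤ |eval x (q i)| := by linarith
    gcongr
  have h1 : ∀ i, (_root_.stdGaussian n).real {x | ((m : ℝ) + 2) ^ 2 ≤ (eval x (q i)) ^ 2} ≤
      1 / ((m : ℝ) + 2) ^ 2 := by
    intro i
    rw [le_div_iff₀ (by positivity), mul_comm]
    exact (mul_meas_ge_le_integral_of_nonneg (Filter.Eventually.of_forall fun x => sq_nonneg _)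
      (integrable_eval_sq (q i)) _).trans (hq i)
  calc _ ≤ (_root_.stdGaussian n).real (⋃ i, {x | ((m : ℝ) + 2) ^ 2 ≤ (eval x (q i)) ^ 2}) :=
        measureReal_mono hsub
    _ ≤ ∑ i, (_root_.stdGaussian n).real {x | ((m : ℝ) + 2) ^ 2 ≤ (eval x (q i)) ^ 2} :=
        measureReal_iUnion_fintype_le _
    _ ≤ ∑ i : Fin m, 1 / ((m : ℝ) + 2) ^ 2 := Finset.sum_le_sum fun i _ => h1 i
    _ = m / ((m : ℝ) + 2) ^ 2 := by simp [div_eq_mul_inv]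
    _ ≤ 1 / 4 := by
        rw [div_le_div_iff₀ (by positivity) (by norm_num)]
        nlinarith [sq_nonneg (m : ℝ)]

lemma slab_vol {m : ℕ} (i : Fin m) (R : ℝ) (hR : 0 ≤ R) (a ε : ℝ) (hε : 0 < ε) :
    volume (Metric.closedBall (0 : Fin m → ℝ) R ∩ {w | |w i - a| ≤ ε}) ≤
      ENNReal.ofReal (2 * ε * (2 * R) ^ (m - 1)) := by
  refine slice_bound i _ ?_ R hR Set.inter_subset_left _ (by positivity) ?_
  · refine measurableSet_closedBall.inter (measurableSet_le ?_ measurable_const)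
    exact ((continuous_apply i).sub continuous_const).abs.measurable
  · intro y
    rw [← Real.volume_closedBall (a := a)]
    refine measure_mono fun t ht => ?_
    have h2 : |Function.update y i t i - a| ≤ ε := ht.2
    simpa [Real.dist_eq] using h2

end HSmall

/-- There are `c₀ > 0` and `C > 0` depending only on `m` and `d` such that for any
`(ε, N)`-diffuse decomposition `(h, q₁, …, q_m)` of a degree-`d` polynomial `p` with
`0 < ε < 1/2` and `N ε log(1/ε) < c₀`, one has `|h|₂ ≤ C N^d |p|₂`. -/
theorem h_small_lemma (m d : ℕ) :
    ∃ (c₀ C : ℝ), 0 < c₀ ∧ 0 < C ∧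
      ∀ (n : ℕ) (ε N : ℝ), 0 < ε → ε < 1 / 2 →
        N * ε * Real.log (1 / ε) < c₀ →
        ∀ (p : MvPolynomial (Fin n) ℝ) (h : MvPolynomial (Fin m) ℝ)
          (q : Fin m → MvPolynomial (Fin n) ℝ),
          p.totalDegree ≤ d → IsDecomposition d p h q → IsDiffuseSet m ε N q →
          gaussL2 h ≤ C * N ^ d * gaussL2 p := by
  classical
  set R : ℝ := (m : ℝ) + 2 with hRdef
  have hR0 : 0 ≤ R := by positivity
  set R' : ℝ := R + 1 with hR'def
  have hR'0 : 0 < R' := by positivity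
  obtain ⟨β, hβ, hbad⟩ := HSmall.bad_vol m d R' hR'0.le d
  set C₁ : ℝ := 4 * β + 2 * (2 * R') ^ m + 1 with hC₁
  have hC₁0 : 0 < C₁ := by positivity
  set G : ℝ := 4 * (2 * R') ^ (m - 1) + 4 * C₁ * m * (d + 1) + 1 with hG
  have hG0 : 0 < G := by positivity
  set SB : ℝ := gaussL2 (HSmall.Bp m R' ^ d) with hSB
  have hSB0 : 0 ≤ SB := Real.sqrt_nonneg _
  have hlog2 : 0 < Real.log 2 := Real.log_pos (by norm_num)
  refine ⟨Real.log 2 / G, 4 * C₁ ^ d * (SB + 1), by positivity, by positivity, ?_⟩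
  intro n ε N hε hε2 hNε p h q hp hdec hdiff
  obtain ⟨hq, hdiff⟩ := hdiff
  obtain ⟨hph, hdeg⟩ := hdec
  set P := _root_.stdGaussian n with hP
  set Q : (Fin n → ℝ) → Fin m → ℝ := fun x i => MvPolynomial.eval x (q i) with hQdef
  have hQ : Measurable Q := measurable_pi_lambda _ fun i => (HSmall.continuous_eval' (q i)).measurable
  have hconv := fun A V hA b hb hV => HSmall.conv_bound P Q hQ ε N hε hdiff A V hA b hb hV
  -- the main event
  set B0 : Set (Fin n → ℝ) := {x | ∀ i, |MvPolynomial.eval x (q i)| ≤ (m : ℝ) + 2} with hB0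
  have hB0m : MeasurableSet B0 := by
    rw [hB0, Set.ofPred_forall]
    exact MeasurableSet.iInter fun i => measurableSet_le
      (HSmall.continuous_eval' (q i)).abs.measurable measurable_const
  have hB0p : 3 / 4 ≤ P.real B0 := by
    have h1 : P.real B0ᶜ ≤ 1 / 4 := HSmall.ball_prob q hq
    have h2 := probReal_compl_eq_one_sub (μ := P) hB0m
    linarith
  have hball : ∀ x ∈ B0, Metric.closedBall (Q x) ε ⊆ Metric.closedBall 0 R' := by
    intro x hx
    refine Metric.closedBall_subset_closedBall' ?_
    have : dist (Q x) 0 ≤ R := by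
      rw [dist_zero_right, pi_norm_le_iff_of_nonneg hR0]
      exact hx
    linarith
  -- transfer to reals
  have hreal : ∀ (A : Set (Fin n → ℝ)) (V : Set (Fin m → ℝ)),
      (∀ x ∈ A, Metric.closedBall (Q x) ε ⊆ V) → ∀ b : ℝ, 0 ≤ b →
      volume V ≤ ENNReal.ofReal b → P.real A ≤ max (b * N) 0 := by
    intro A V hA b hb hV
    have h1 := hconv A V hA b hb hV
    rw [measureReal_def, ← ENNReal.toReal_ofReal']
    exact ENNReal.toReal_mono ENNReal.ofReal_ne_top h1
  have hN : 3 / 4 ≤ (2 * R') ^ m * N := by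
    have h1 := hreal B0 _ hball ((2 * R') ^ m) (by positivity)
      (by rw [Real.volume_pi_closedBall _ hR'0.le, Fintype.card_fin])
    rcases max_cases ((2 * R') ^ m * N) 0 with h2 | h2 <;> linarith
  have hN0 : 0 < N := by
    by_contra hcon
    have : (2 * R') ^ m * N ≤ 0 := mul_nonpos_of_nonneg_of_nonpos (by positivity) (not_lt.1 hcon)
    linarith
  have hNε' : N * ε * G < 1 := by
    have h1 : Real.log 2 ≤ Real.log (1 / ε) := by
      apply Real.log_le_log (by norm_num)
      rw [le_div_iff₀ hε]; linarith
    have h2 : N * ε * Real.log 2 < Real.log 2 / G :=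
      lt_of_le_of_lt (mul_le_mul_of_nonneg_left h1 (by positivity)) hNε
    rw [lt_div_iff₀ hG0] at h2
    have h3 : Real.log 2 * (N * ε * G) < Real.log 2 * 1 := by linarith
    exact lt_of_mul_lt_mul_left h3 hlog2.le
  -- the degree of h
  have hqd : ∀ i, 1 ≤ (q i).totalDegree := by
    intro i
    by_contra hcon
    have h0 : (q i).totalDegree = 0 := by omega
    have hC := MvPolynomial.totalDegree_eq_zero_iff_eq_C.1 h0
    set a := MvPolynomial.coeff 0 (q i) with ha
    have h1 := hreal B0 (Metric.closedBall 0 R' ∩ {w | |w i - a| ≤ ε}) (by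
      intro x hx w hw
      refine ⟨hball x hx hw, ?_⟩
      have h2 := (dist_pi_le_iff hε.le).1 (Metric.mem_closedBall.1 hw) i
      have h3 : Q x i = a := by
        simp only [hQdef]
        rw [hC]; simp
      rw [h3, Real.dist_eq] at h2
      exact h2) _ (by positivity) (HSmall.slab_vol i R' hR'0.le a ε hε)
    have h2 : 2 * (2 * ε * (2 * R') ^ (m - 1) * N) ≤ N * ε * G := by
      have : 2 * (2 * ε * (2 * R') ^ (m - 1) * N) = N * ε * (4 * (2 * R') ^ (m - 1)) := by ring
      rw [this]
      refine mul_le_mul_of_nonneg_left ?_ (by positivity)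
      have : 0 ≤ 4 * C₁ * m * (d + 1) := by positivity
      rw [hG]; linarith
    rcases max_cases (2 * ε * (2 * R') ^ (m - 1) * N) 0 with h3 | h3 <;> linarith
  have hhd : h.totalDegree ≤ d := by
    refine Finset.sup_le fun s hs => ?_
    refine le_trans ?_ (hdeg s hs)
    rw [Finsupp.sum_fintype _ _ (by simp)]
    exact Finset.sum_le_sum fun i _ => Nat.le_mul_of_pos_right _ (hqd i)
  set K : ℝ := C₁ * N with hK
  have hK1 : 1 ≤ K := by
    have : 2 * (2 * R') ^ m * N ≤ K := by
      rw [hK]; gcongr; rw [hC₁]; linarith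
    linarith
  set s : ℝ := K * (m * ε) with hs
  have hs0 : 0 ≤ s := by positivity
  have hsmall : 4 * s * (d + 1) < 1 := by
    refine lt_of_le_of_lt ?_ hNε'
    have : 4 * s * (d + 1) = N * ε * (4 * C₁ * m * (d + 1)) := by rw [hs, hK]; ring
    rw [this]
    refine mul_le_mul_of_nonneg_left ?_ (by positivity)
    have : 0 ≤ 4 * (2 * R') ^ (m - 1) := by positivity
    rw [hG]; linarith
  have hs32 : (1 + s) ^ d - 1 ≤ 1 / 2 := by
    have := HSmall.pow_bound s hs0 d (by nlinarith)
    nlinarith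
  -- the bad event
  set V : Set (Fin m → ℝ) := Metric.closedBall 0 R' ∩ {w | ¬ HSmall.Good K d h w} with hV
  set A : Set (Fin n → ℝ) := {x | Metric.closedBall (Q x) ε ⊆ V} with hA
  have hAp : P.real A ≤ 1 / 4 := by
    have h1 := hreal A V (fun x hx => hx) (β / K) (by positivity) (hbad K (by linarith) h hhd)
    have h2 : β / K * N ≤ 1 / 4 := by
      rw [hK, div_mul_eq_mul_div, div_le_div_iff₀ (by positivity) (by norm_num)]
      have : 4 * β ≤ C₁ := by
        have : 0 ≤ 2 * (2 * R') ^ m := by positivity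
        rw [hC₁]; linarith
      nlinarith
    exact h1.trans (max_le h2 (by norm_num))
  set M : ℝ := 2 * K ^ d * (SB + 1) with hM
  have hM0 : 0 < M := by positivity
  have hgood : ∀ x ∈ B0 \ A, gaussL2 h ≤ M * |MvPolynomial.eval x p| := by
    rintro x ⟨hx, hxA⟩
    have hxA' : ¬ (Metric.closedBall (Q x) ε ⊆ V) := hxA
    rw [Set.not_subset] at hxA'
    obtain ⟨w, hw, hwV⟩ := hxA'
    have hwR := hball x hx hw
    have hwG : HSmall.Good K d h w := by
      by_contra hcon
      exact hwV ⟨hwR, hcon⟩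
    have h1 := HSmall.good_final d R' K hR'0.le hK1 h hhd w hwR hwG
    have h2 := HSmall.good_bound K (by linarith) w s d h hhd hwG (Q x) (by
      rw [hs]
      refine mul_le_mul_of_nonneg_left ?_ (by linarith)
      calc ∑ i, |Q x i - w i| ≤ ∑ i : Fin m, ε := Finset.sum_le_sum fun i _ => by
            have := (dist_pi_le_iff hε.le).1 (Metric.mem_closedBall.1 hw) i
            rwa [Real.dist_eq, abs_sub_comm] at this
        _ = m * ε := by simp)
    have h3 : MvPolynomial.eval (Q x) h = MvPolynomial.eval x p := by
      rw [← hph, HSmall.eval_aeval]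
    rw [h3] at h2
    have h4 : |MvPolynomial.eval w h| ≤ 2 * |MvPolynomial.eval x p| := by
      have h5 := abs_sub_abs_le_abs_sub (MvPolynomial.eval w h) (MvPolynomial.eval x p)
      rw [abs_sub_comm (MvPolynomial.eval w h)] at h5
      have h6 : ((1 + s) ^ d - 1) * |MvPolynomial.eval w h| ≤ 1 / 2 * |MvPolynomial.eval w h| :=
        mul_le_mul_of_nonneg_right hs32 (abs_nonneg _)
      linarith
    calc gaussL2 h ≤ K ^ d * |MvPolynomial.eval w h| * SB := h1
      _ ≤ K ^ d * (2 * |MvPolynomial.eval x p|) * (SB + 1) := by gcongr; linarith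
      _ = _ := by rw [hM]; ring
  have hh0 : 0 ≤ gaussL2 h := Real.sqrt_nonneg _
  have hprob : 1 / 2 ≤ P.real {x | (gaussL2 h / M) ^ 2 ≤ (MvPolynomial.eval x p) ^ 2} := by
    have h1 : B0 ⊆ A ∪ {x | (gaussL2 h / M) ^ 2 ≤ (MvPolynomial.eval x p) ^ 2} := by
      intro x hx
      by_cases hxA : x ∈ A
      · exact Or.inl hxA
      · refine Or.inr ?_
        show (gaussL2 h / M) ^ 2 ≤ (MvPolynomial.eval x p) ^ 2
        have := hgood x ⟨hx, hxA⟩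
        rw [← sq_abs (MvPolynomial.eval x p)]
        have h2 : gaussL2 h / M ≤ |MvPolynomial.eval x p| := by
          rw [div_le_iff₀ hM0]; linarith
        gcongr
    have h2 := (measureReal_mono (μ := P) h1).trans (measureReal_union_le _ _)
    linarith
  have hmk := mul_meas_ge_le_integral_of_nonneg (μ := P)
    (Filter.Eventually.of_forall fun x => sq_nonneg (MvPolynomial.eval x p))
    (HSmall.integrable_eval_sq p) ((gaussL2 h / M) ^ 2)
  have hI : (gaussL2 h / M / 2) ^ 2 ≤ ∫ x, (MvPolynomial.eval x p) ^ 2 ∂P := by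
    nlinarith [sq_nonneg (gaussL2 h / M)]
  have hfin : gaussL2 h / M / 2 ≤ gaussL2 p := Real.le_sqrt_of_sq_le hI
  rw [div_div, div_le_iff₀ (by positivity)] at hfin
  calc gaussL2 h ≤ gaussL2 p * (M * 2) := hfin
    _ = _ := by rw [hM, hK, mul_pow]; ring
end
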